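/- There exists an absolute constant c ≥ 1 such that for every dimension d ≥ 2, every convex body C ⊆ ℝ^d, every centrally symmetric convex body D ⊆ ℝ^d, and every α > 0, the translative covering number N_D(C, α) satisfies c^{−d} · (λ_d(D°)·λ_d(C)) / (ω_d² · α^d) ≤ N_D(C, α) ≤ c^{d} · (λ_d(D°)·λ_d(C + α·D)) / (ω_d² · α^d), where λ_d is Lebesgue measure on ℝ^d and ω_d := λ_d(Euclidean unit ball of ℝ^d). -/

import Mathlib

open Set MeasureTheory Metric
open scoped Pointwise RealInnerProductSpace ENNReal

noncomputable section

abbrev Euc (d : ℕ) := EuclideanSpace ℝ (Fin d)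

/-- A convex body: a compact convex set with nonempty interior. -/
def IsConvexBody {d : ℕ} (K : Set (Euc d)) : Prop :=
  IsCompact K ∧ Convex ℝ K ∧ (interior K).Nonempty

/-- The polar of a set. -/
def polarSet {d : ℕ} (S : Set (Euc d)) : Set (Euc d) :=
  {y | ∀ x ∈ S, ⟪x, y⟫ ≤ 1}

/-- The Hilbert distance with respect to the body `K`. -/
def hilbertDist {d : ℕ} (K : Set (Euc d)) (x y : Euc d) : ℝ :=
  -(1 / 2) * Real.log ((1 - gauge ((fun k => k - x) '' K) (y - x)) *
    (1 - gauge ((fun k => k - y) '' K) (x - y)))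

/-- The Hilbert ball of radius `r` centered at `x`. -/
def hilbertBall {d : ℕ} (K : Set (Euc d)) (x : Euc d) (r : ℝ) : Set (Euc d) :=
  {y ∈ interior K | hilbertDist K x y ≤ r}

/-- The Hilbert covering number of `U` at scale `α` in the geometry induced by `K`. -/
def hilbertCov {d : ℕ} (K U : Set (Euc d)) (α : ℝ) : ℕ :=
  sInf {m : ℕ | ∃ x : Fin m → Euc d, (∀ i, x i ∈ interior K) ∧
    U ⊆ ⋃ i, hilbertBall K (x i) α}

/-- The translative covering number of `U` by translates of `α • D`. -/
def transCov {d : ℕ} (D U : Set (Euc d)) (α : ℝ) : ℕ :=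
  sInf {m : ℕ | ∃ x : Fin m → Euc d, U ⊆ ⋃ i, x i +ᵥ α • D}

/-- The Hilbert `α`-expansion of `G` in `K`. -/
def hilbertExpand {d : ℕ} (K G : Set (Euc d)) (α : ℝ) : Set (Euc d) :=
  {x ∈ interior K | sInf (hilbertDist K x '' G) ≤ α}

/-- The Lebesgue volume of the Euclidean unit ball in `ℝ^d`. -/
def ωd (d : ℕ) : ℝ := (volume (ball (0 : Euc d) 1)).toReal

/-- The Hilbert Finsler unit ball at `y` in the geometry induced by `K`. -/
def finslerBall {d : ℕ} (K : Set (Euc d)) (y : Euc d) : Set (Euc d) :=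
  {v | gauge ((fun k => k - y) '' K) v + gauge ((fun k => k - y) '' K) (-v) ≤ 2}

/-- The Hilbert Holmes–Thompson volume of `U` in the geometry induced by `K`. -/
def volH {d : ℕ} (K U : Set (Euc d)) : ℝ :=
  (1 / ωd d) * ∫ y in U, (volume (polarSet (finslerBall K y))).toReal

/-- The recentered Macbeath region `A(x) := (K ∩ (2x − K)) − x`. -/
def macbeathA {d : ℕ} (K : Set (Euc d)) (x : Euc d) : Set (Euc d) :=
  (fun k => k - x) '' (K ∩ ((fun k => (2 : ℝ) • x - k) '' K))


lemma zero_mem_int {d : ℕ} {D : Set (Euc d)} (hD : IsConvexBody D) (hs : D = -D) :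
    (0 : Euc d) ∈ interior D := by
  obtain ⟨hc, hconv, x, hx⟩ := hD
  have hx' : -x ∈ interior D := by
    have h1 : -x ∈ (Homeomorph.neg (Euc d)) ⁻¹' interior D := by simpa using hx
    rw [(Homeomorph.neg (Euc d)).preimage_interior] at h1
    rw [hs]
    exact h1
  have := hconv.interior hx hx' (by norm_num : (0:ℝ) ≤ 1/2) (by norm_num : (0:ℝ) ≤ 1/2) (by norm_num)
  simpa using this

lemma exists_ball_sub {d : ℕ} {D : Set (Euc d)} (hD : IsConvexBody D) (hs : D = -D) :
    ∃ r > 0, closedBall (0 : Euc d) r ⊆ D := by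
  have := zero_mem_int hD hs
  rw [mem_interior_iff_mem_nhds, Metric.nhds_basis_closedBall.mem_iff] at this
  simpa using this

lemma exists_sub_ball {d : ℕ} {D : Set (Euc d)} (hD : IsConvexBody D) :
    ∃ R > 0, D ⊆ closedBall (0 : Euc d) R := by
  obtain ⟨R, hR, h⟩ := hD.1.isBounded.subset_closedBall_lt 0 0
  exact ⟨R, hR, h⟩

lemma polar_convex {d : ℕ} (D : Set (Euc d)) : Convex ℝ (polarSet D) := by
  intro x hx y hy a b ha hb hab z hz
  simp only [inner_add_right, inner_smul_right]
  nlinarith [hx z hz, hy z hz]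

lemma polar_closed {d : ℕ} (D : Set (Euc d)) : IsClosed (polarSet D) := by
  have : polarSet D = ⋂ x ∈ D, {y | ⟪x, y⟫ ≤ 1} := by
    ext y; simp [polarSet]
  rw [this]
  exact isClosed_biInter fun x _ => isClosed_le (by fun_prop) (by fun_prop)

lemma polar_neg {d : ℕ} {D : Set (Euc d)} (hs : D = -D) {y : Euc d} (hy : y ∈ polarSet D) :
    -y ∈ polarSet D := by
  intro x hx
  have : -x ∈ D := by rw [hs]; simpa using hx
  simpa using hy _ this

lemma polar_bounded {d : ℕ} {D : Set (Euc d)} (hD : IsConvexBody D) (hs : D = -D) :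
    ∃ R > 0, polarSet D ⊆ closedBall (0 : Euc d) R := by
  obtain ⟨r, hr, h⟩ := exists_ball_sub hD hs
  refine ⟨1 / r, by positivity, fun y hy => ?_⟩
  rw [mem_closedBall_zero_iff]
  by_cases hy0 : y = 0
  · subst hy0; simp; positivity
  have hn : 0 < ‖y‖ := norm_pos_iff.mpr hy0
  have hmem : (r / ‖y‖) • y ∈ D := by
    apply h
    rw [mem_closedBall_zero_iff, norm_smul, Real.norm_eq_abs, abs_of_pos (by positivity)]
    field_simp; rfl
  have := hy _ hmem
  rw [inner_smul_left, real_inner_self_eq_norm_sq] at this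
  simp only [conj_trivial] at this
  rw [le_div_iff₀ hr]
  have h2 : r / ‖y‖ * ‖y‖ ^ 2 = ‖y‖ * r := by field_simp
  linarith

lemma polar_compact {d : ℕ} {D : Set (Euc d)} (hD : IsConvexBody D) (hs : D = -D) :
    IsCompact (polarSet D) := by
  obtain ⟨R, _, h⟩ := polar_bounded hD hs
  exact (isCompact_closedBall _ _).of_isClosed_subset (polar_closed D) h

lemma polar_ball {d : ℕ} {D : Set (Euc d)} (hD : IsConvexBody D) :
    ∃ r > 0, closedBall (0 : Euc d) r ⊆ polarSet D := by
  obtain ⟨R, hR, h⟩ := exists_sub_ball hD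
  refine ⟨1 / R, by positivity, fun y hy x hx => ?_⟩
  rw [mem_closedBall_zero_iff] at hy
  have h1 := h hx
  rw [mem_closedBall_zero_iff] at h1
  calc ⟪x, y⟫ ≤ ‖x‖ * ‖y‖ := real_inner_le_norm _ _
    _ ≤ R * (1 / R) := by gcongr
    _ = 1 := by field_simp

lemma polar_body {d : ℕ} {D : Set (Euc d)} (hD : IsConvexBody D) (hs : D = -D) :
    IsConvexBody (polarSet D) := by
  refine ⟨polar_compact hD hs, polar_convex D, 0, ?_⟩
  obtain ⟨r, hr, h⟩ := polar_ball hD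
  rw [mem_interior_iff_mem_nhds]
  exact Filter.mem_of_superset (closedBall_mem_nhds _ hr) h

lemma polar_symm {d : ℕ} {D : Set (Euc d)} (hs : D = -D) : polarSet D = -polarSet D := by
  ext y
  constructor
  · intro h; exact polar_neg hs h
  · intro h; simpa using polar_neg hs h

lemma body_vol_pos {d : ℕ} {D : Set (Euc d)} (hD : IsConvexBody D) : 0 < (volume D).toReal := by
  apply ENNReal.toReal_pos
  · exact (Measure.measure_pos_of_nonempty_interior _ hD.2.2).ne'
  · exact hD.1.measure_ne_top

lemma vol_smul {d : ℕ} (D : Set (Euc d)) {a : ℝ} (ha : 0 ≤ a) :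
    (volume (a • D)).toReal = a ^ d * (volume D).toReal := by
  rw [Measure.addHaar_smul]
  simp only [finrank_euclideanSpace, Fintype.card_fin, ENNReal.toReal_mul]
  rw [ENNReal.toReal_ofReal (abs_nonneg _), abs_of_nonneg (by positivity)]

/-- Lower bound for a cover. -/
lemma cover_lower {d : ℕ} {C D : Set (Euc d)} (hD : IsConvexBody D) {α : ℝ} (hα : 0 < α)
    {m : ℕ} (x : Fin m → Euc d) (h : C ⊆ ⋃ i, x i +ᵥ α • D) :
    (volume C).toReal ≤ m * (α ^ d * (volume D).toReal) := by
  have h1 : volume C ≤ ∑ i : Fin m, volume (x i +ᵥ α • D) :=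
    (measure_mono h).trans (measure_iUnion_fintype_le _ _)
  simp only [measure_vadd, Finset.sum_const, Finset.card_univ, Fintype.card_fin, nsmul_eq_mul] at h1
  have hf : (m : ℝ≥0∞) * volume (α • D) ≠ ∞ :=
    ENNReal.mul_ne_top (by simp) (hD.1.smul α).measure_ne_top
  have := ENNReal.toReal_mono hf h1
  rwa [ENNReal.toReal_mul, vol_smul _ hα.le, ENNReal.toReal_natCast] at this

/-- Packing/covering: existence of good net. -/
lemma exists_net {d : ℕ} {C D : Set (Euc d)} (hC : IsConvexBody C) (hD : IsConvexBody D)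
    (hs : D = -D) {α : ℝ} (hα : 0 < α) :
    ∃ (m : ℕ) (x : Fin m → Euc d), (∀ i, x i ∈ C) ∧ C ⊆ (⋃ i, x i +ᵥ α • D) ∧
      m * ((α / 2) ^ d * (volume D).toReal) ≤ (volume (C + (α / 2) • D)).toReal := by
  classical
  let P : Finset (Euc d) → Prop := fun s => (↑s ⊆ C) ∧ ∀ x ∈ s, ∀ y ∈ s, x ≠ y → x - y ∉ α • D
  have hvD := body_vol_pos hD
  have hcomp : IsCompact (C + (α / 2) • D) := hC.1.add (hD.1.smul _)
  have hpack : ∀ s, P s → s.card * ((α / 2) ^ d * (volume D).toReal) ≤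
      (volume (C + (α / 2) • D)).toReal := by
    intro s ⟨hsC, hsep⟩
    have hdisj : (s : Set (Euc d)).PairwiseDisjoint (fun x => x +ᵥ (α / 2) • D) := by
      intro x hx y hy hxy
      rw [Function.onFun, Set.disjoint_left]
      rintro z ⟨_, ⟨a, ha, rfl⟩, rfl⟩ ⟨_, ⟨b, hb, rfl⟩, hab⟩
      apply hsep x hx y hy hxy
      have hna : -a ∈ D := by rw [hs]; simpa using ha
      refine ⟨(1/2 : ℝ) • b + (1/2 : ℝ) • (-a), hD.2.1 hb hna (by norm_num) (by norm_num)
        (by norm_num), ?_⟩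
      simp only [vadd_eq_add] at hab
      have : x - y = (α/2) • b - (α/2) • a := by
        rw [sub_eq_sub_iff_add_eq_add]; rw [← hab]; abel
      rw [this]
      module
    have hsub : (⋃ x ∈ s, x +ᵥ (α / 2) • D) ⊆ C + (α / 2) • D := by
      intro z hz
      simp only [mem_iUnion] at hz
      obtain ⟨x, hx, w, hw, rfl⟩ := hz
      exact ⟨x, hsC hx, w, hw, rfl⟩
    have hm := measure_mono (μ := volume) hsub
    rw [measure_biUnion_finset hdisj
      (fun x _ => ((hD.1.smul (α/2)).vadd x).measurableSet)] at hm
    simp only [measure_vadd, Finset.sum_const, nsmul_eq_mul] at hm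
    have := ENNReal.toReal_mono hcomp.measure_ne_top hm
    rwa [ENNReal.toReal_mul, vol_smul _ (by positivity), ENNReal.toReal_natCast] at this
  obtain ⟨B, hB⟩ := exists_nat_gt ((volume (C + (α / 2) • D)).toReal / ((α / 2) ^ d * (volume D).toReal))
  have hpos : 0 < (α / 2) ^ d * (volume D).toReal := by positivity
  have hbd : ∀ s, P s → s.card ≤ B := by
    intro s h
    have := hpack s h
    rw [← le_div_iff₀ hpos] at this
    exact_mod_cast (this.trans hB.le)
  -- maximal cardinality
  obtain ⟨k, ⟨s, hPs, hcard⟩, hmax⟩ : ∃ k, (∃ s, P s ∧ s.card = k) ∧ ∀ s, P s → s.card ≤ k := by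
    have hne : ∃ k, ∃ s, P s ∧ s.card = k := ⟨0, ∅, by simp [P], rfl⟩
    refine ⟨Nat.findGreatest (fun k => ∃ s, P s ∧ s.card = k) B, ?_, ?_⟩
    · exact Nat.findGreatest_spec (P := fun k => ∃ s, P s ∧ s.card = k) (Nat.zero_le B)
        ⟨∅, by simp [P], rfl⟩
    · intro s h
      exact Nat.le_findGreatest (hbd s h) ⟨s, h, rfl⟩
  subst hcard
  refine ⟨s.card, fun i => (s.equivFin.symm i : Euc d), fun i => hPs.1 (s.equivFin.symm i).2, ?_,
    hpack s hPs⟩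
  intro z hz
  simp only [mem_iUnion]
  have key : ∃ x ∈ s, z - x ∈ α • D := by
    by_contra! hcon
    have hzs : z ∉ s := by
      intro hzs
      apply hcon z hzs
      rw [sub_self]
      exact ⟨0, interior_subset (zero_mem_int hD hs), by simp⟩
    have hP : P (insert z s) := by
      refine ⟨?_, ?_⟩
      · intro y hy
        simp only [Finset.coe_insert, mem_insert_iff] at hy
        rcases hy with rfl | hy
        · exact hz
        · exact hPs.1 hy
      · intro x hx y hy hxy
        rw [Finset.mem_insert] at hx hy
        rcases hx with rfl | hx <;> rcases hy with rfl | hy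
        · exact absurd rfl hxy
        · exact hcon y hy
        · intro ⟨a, ha, hab⟩
          apply hcon x hx
          refine ⟨-a, by rw [hs]; simpa using ha, ?_⟩
          simp only at hab ⊢
          rw [smul_neg, hab]; abel
        · exact hPs.2 x hx y hy hxy
    have := hmax _ hP
    rw [Finset.card_insert_of_notMem hzs] at this
    omega
  obtain ⟨x, hx, w, hw, hwx⟩ := key
  refine ⟨s.equivFin ⟨x, hx⟩, ?_⟩
  simp only [Equiv.symm_apply_apply]
  exact ⟨α • w, ⟨w, hw, rfl⟩, by simp only [vadd_eq_add] at hwx ⊢; rw [hwx]; abel⟩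

lemma hol_integral {α : Type*} [MeasurableSpace α] {μ : Measure α} {U : Set ℂ} (hU : IsOpen U)
    {f : ℂ → α → ℂ} (hm : ∀ w ∈ U, AEStronglyMeasurable (f w) μ)
    (hd : ∀ a, DifferentiableOn ℂ (fun w => f w a) U) {b : α → ℝ} (hb : Integrable b μ)
    (hbd : ∀ w ∈ U, ∀ a, ‖f w a‖ ≤ b a) :
    DifferentiableOn ℂ (fun w => ∫ a, f w a ∂μ) U := by
  intro w₀ hw₀
  obtain ⟨r, hr, hrU⟩ : ∃ r > 0, closedBall w₀ r ⊆ U := by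
    have := hU.mem_nhds hw₀
    rw [Metric.nhds_basis_closedBall.mem_iff] at this
    simpa using this
  have hr2 : 0 < r / 2 := by positivity
  have hsub : ∀ w ∈ ball w₀ (r/2), closedBall w (r/2) ⊆ U := by
    intro w hw
    refine (closedBall_subset_closedBall' ?_).trans hrU
    rw [mem_ball] at hw
    linarith
  have hder : ∀ w ∈ U, ∀ a, HasDerivAt (fun w => f w a) (deriv (fun w => f w a) w) w := by
    intro w hw a
    exact ((hd a).differentiableAt (hU.mem_nhds hw)).hasDerivAt
  have hmeas : AEStronglyMeasurable (fun a => deriv (fun w => f w a) w₀) μ := by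
    -- limit of difference quotients
    let u : ℕ → ℂ := fun n => ((r / (n + 2) : ℝ) : ℂ)
    have hu0 : Filter.Tendsto (fun n : ℕ => (r / (n + 2) : ℝ)) Filter.atTop (nhds 0) := by
      have h1 : Filter.Tendsto (fun n : ℕ => ((n:ℝ) + 2)) Filter.atTop Filter.atTop :=
        Filter.tendsto_atTop_add_const_right _ _ tendsto_natCast_atTop_atTop
      exact h1.const_div_atTop r
    have hu1 : Filter.Tendsto u Filter.atTop (nhds 0) := by
      have := (Complex.continuous_ofReal.tendsto 0).comp hu0
      rw [Complex.ofReal_zero] at this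
      exact this
    have hune : ∀ n, u n ≠ 0 := by
      intro n
      simp only [u, ne_eq, Complex.ofReal_eq_zero]
      positivity
    have hu2 : Filter.Tendsto u Filter.atTop (nhdsWithin 0 {0}ᶜ) :=
      tendsto_nhdsWithin_iff.mpr ⟨hu1, Filter.Eventually.of_forall hune⟩
    have huU : ∀ n, w₀ + u n ∈ U := by
      intro n
      apply hrU
      simp only [mem_closedBall, dist_self_add_left, u, Complex.norm_real, Real.norm_eq_abs]
      rw [abs_of_pos (by positivity)]
      apply div_le_self hr.le
      have : (0:ℝ) ≤ n := by positivity
      linarith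
    refine aestronglyMeasurable_of_tendsto_ae Filter.atTop
      (f := fun n a => (u n)⁻¹ • (f (w₀ + u n) a - f w₀ a)) ?_ ?_
    · intro n
      exact ((hm _ (huU n)).sub (hm _ hw₀)).const_smul ((u n)⁻¹)
    · refine Filter.Eventually.of_forall fun a => ?_
      exact (hder w₀ hw₀ a).tendsto_slope_zero.comp hu2
  have := hasDerivAt_integral_of_dominated_loc_of_deriv_le (μ := μ) (F := f)
    (F' := fun w a => deriv (fun w => f w a) w) (x₀ := w₀) (bound := fun a => b a / (r/2))
    (ball_mem_nhds w₀ hr2) ?_ ?_ hmeas ?_ (hb.div_const _) ?_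
  · exact this.2.differentiableAt.differentiableWithinAt
  · filter_upwards [hU.mem_nhds hw₀] with w hw using hm w hw
  · exact hb.mono' (hm _ hw₀) (Filter.Eventually.of_forall (hbd _ hw₀))
  · refine Filter.Eventually.of_forall fun a w hw => ?_
    refine Complex.norm_deriv_le_of_forall_mem_sphere_norm_le hr2 ?_ ?_
    · apply DifferentiableOn.diffContOnCl
      rw [closure_ball _ hr2.ne']
      exact (hd a).mono (hsub w hw)
    · intro z hz
      exact hbd z (hsub w hw (sphere_subset_closedBall hz)) a
  · refine Filter.Eventually.of_forall fun a w hw => ?_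
    exact hder w (hsub w hw (mem_closedBall_self hr2.le)) a

/-- smooth cutoff adapted to `D` -/
lemma exists_cutoff {d : ℕ} {D : Set (Euc d)} (hD : IsConvexBody D) (hs : D = -D) :
    ∃ f : Euc d → ℝ, ContDiff ℝ (⊤ : ℕ∞) f ∧ (∀ x, 0 ≤ f x) ∧ (∀ x, f x ≤ 1) ∧
      (∀ x ∈ (1/2 : ℝ) • D, f x = 1) ∧ (∀ x, x ∉ D → f x = 0) := by
  have hsub : (1/2 : ℝ) • D ⊆ interior D := by
    rintro _ ⟨x, hx, rfl⟩
    have := hD.2.1.combo_interior_self_mem_interior (x := 0) (y := x) (zero_mem_int hD hs) hx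
      (by norm_num : (0:ℝ) < 1/2) (by norm_num : (0:ℝ) ≤ 1/2) (by norm_num)
    simpa using this
  obtain ⟨f, hf, hr, hsupp, h1⟩ := exists_contMDiff_support_eq_eq_one_iff
    (modelWithCornersSelf ℝ (Euc d)) (n := ⊤) isOpen_interior (hD.1.smul (1/2 : ℝ)).isClosed hsub
  refine ⟨f, hf.contDiff, fun x => (hr ⟨x, rfl⟩).1, fun x => (hr ⟨x, rfl⟩).2,
    fun x hx => (h1 x).1 hx, fun x hx => ?_⟩
  have : x ∉ Function.support f := by
    rw [hsupp]; exact fun h => hx (interior_subset h)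
  simpa using this

/-- the Laplace–Fourier transform -/
def lapF {d : ℕ} (f : Euc d → ℝ) (x y : Euc d) : ℂ :=
  ∫ ξ, (f ξ : ℂ) * Complex.exp (-2 * Real.pi * Complex.I * (⟪ξ, x⟫ : ℝ) + 2 * Real.pi * (⟪ξ, y⟫ : ℝ))

lemma lapF_planch {d : ℕ} {D : Set (Euc d)} (hD : IsConvexBody D)
    {f : Euc d → ℝ} (hf : ContDiff ℝ (⊤ : ℕ∞) f) (h0 : ∀ x, 0 ≤ f x) (h1 : ∀ x, f x ≤ 1)
    (hsupp : ∀ x, x ∉ D → f x = 0) (y : Euc d) (b : ℝ) (hy : ∀ ξ ∈ D, ⟪ξ, y⟫ ≤ b) :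
    ∫⁻ x, ‖lapF f x y‖ₑ ^ 2 ≤ ENNReal.ofReal (Real.exp (4 * Real.pi * b) * (volume D).toReal) := by
  let g : Euc d → ℂ := fun ξ => (f ξ : ℂ) * (Real.exp (2 * Real.pi * ⟪ξ, y⟫) : ℝ)
  have hgc : HasCompactSupport g := by
    apply HasCompactSupport.intro hD.1
    intro x hx
    simp [g, hsupp x hx]
  have hgs : ContDiff ℝ (⊤ : ℕ∞) g := by
    have hin : ContDiff ℝ (⊤ : ℕ∞) (fun ξ : Euc d => Real.exp (2 * Real.pi * ⟪ξ, y⟫)) :=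
      (contDiff_const.mul (contDiff_id.inner ℝ contDiff_const)).exp
    exact (Complex.ofRealCLM.contDiff.comp hf).mul (Complex.ofRealCLM.contDiff.comp hin)
  let G : SchwartzMap (Euc d) ℂ := hgc.toSchwartzMap hgs
  have hGg : ∀ ξ, G ξ = g ξ := fun ξ => rfl
  have hF : ∀ x, FourierTransform.fourier G x = lapF f x y := by
    intro x
    rw [SchwartzMap.fourier_coe, Real.fourier_eq]
    unfold lapF
    congr 1
    ext ξ
    rw [hGg, Circle.smul_def, smul_eq_mul, Real.fourierChar_apply]
    simp only [g]
    rw [Complex.exp_add]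
    push_cast
    rw [show 2 * (Real.pi : ℂ) * -(⟪ξ, x⟫ : ℝ) * Complex.I =
      -2 * Real.pi * Complex.I * (⟪ξ, x⟫ : ℝ) by ring]
    ring
  have hP := SchwartzMap.integral_norm_sq_fourier G
  have hintg : Integrable (fun x => ‖(FourierTransform.fourier G) x‖ ^ 2) :=
    ((FourierTransform.fourier G).memLp 2).integrable_norm_pow (by norm_num)
  have hb : ∫ x, ‖G x‖ ^ 2 ≤ Real.exp (4 * Real.pi * b) * (volume D).toReal := by
    have : ∀ x, ‖G x‖ ^ 2 ≤ D.indicator (fun _ => Real.exp (4 * Real.pi * b)) x := by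
      intro x
      rw [hGg]
      by_cases hx : x ∈ D
      · rw [indicator_of_mem hx]
        simp only [g, norm_mul, Complex.norm_real, Real.norm_eq_abs, abs_of_nonneg (h0 x),
          abs_of_pos (Real.exp_pos _)]
        rw [mul_pow, ← Real.exp_nat_mul]
        calc f x ^ 2 * Real.exp ((2:ℕ) * (2 * Real.pi * ⟪x, y⟫))
            ≤ 1 * Real.exp ((2:ℕ) * (2 * Real.pi * ⟪x, y⟫)) := by
              gcongr
              exact pow_le_one₀ (h0 x) (h1 x)
          _ ≤ Real.exp (4 * Real.pi * b) := by
              rw [one_mul, Real.exp_le_exp]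
              push_cast
              have := hy x hx
              nlinarith [Real.pi_pos]
      · rw [indicator_of_notMem hx]
        simp [g, hsupp x hx]
    have hi : Integrable (D.indicator (fun _ => Real.exp (4 * Real.pi * b))) := by
      rw [integrable_indicator_iff hD.1.measurableSet]
      exact integrableOn_const hD.1.measure_ne_top
    refine (integral_mono ((G.memLp 2).integrable_norm_pow (by norm_num)) hi this).trans ?_
    rw [integral_indicator hD.1.measurableSet, setIntegral_const, smul_eq_mul, mul_comm]
    rfl
  rw [← hP] at hb
  refine le_trans (le_of_eq ?_) (ENNReal.ofReal_le_ofReal hb)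
  rw [ofReal_integral_eq_lintegral_ofReal hintg (Filter.Eventually.of_forall fun x => by positivity)]
  congr 1
  ext x
  rw [hF, ENNReal.ofReal_pow (norm_nonneg _), ofReal_norm]

lemma lapF_cont {d : ℕ} {D : Set (Euc d)} (hD : IsConvexBody D)
    {f : Euc d → ℝ} (hf : Continuous f)
    (hsupp : ∀ x, x ∉ D → f x = 0) : Continuous (fun p : Euc d × Euc d => lapF f p.1 p.2) := by
  have : (fun p : Euc d × Euc d => lapF f p.1 p.2) = fun p => ∫ ξ in D, (f ξ : ℂ) *
      Complex.exp (-2 * Real.pi * Complex.I * (⟪ξ, p.1⟫ : ℝ) + 2 * Real.pi * (⟪ξ, p.2⟫ : ℝ)) := by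
    ext p
    rw [setIntegral_eq_integral_of_forall_compl_eq_zero]
    · rfl
    · intro x hx
      simp [hsupp x hx]
  rw [this]
  apply continuous_parametric_integral_of_continuous _ hD.1
  unfold Function.uncurry
  fun_prop

lemma lapF_mean {d : ℕ} {D : Set (Euc d)} (hD : IsConvexBody D)
    {f : Euc d → ℝ} (hf : Continuous f)
    (hsupp : ∀ x, x ∉ D → f x = 0) (x y : Euc d) :
    ‖lapF f 0 0‖ₑ ^ 2 ≤ ENNReal.ofReal (2 * Real.pi)⁻¹ * ∫⁻ θ in Ioc 0 (2 * Real.pi),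
      ‖lapF f (Real.cos θ • x - Real.sin θ • y) (Real.sin θ • x + Real.cos θ • y)‖ₑ ^ 2 := by
  let H : ℂ → ℂ := fun w => ∫ ξ in D, (f ξ : ℂ) *
    Complex.exp (w * (-2 * Real.pi * Complex.I * (⟪ξ, x⟫ : ℝ) + 2 * Real.pi * (⟪ξ, y⟫ : ℝ)))
  have hH : ∀ θ : ℝ, H (circleMap 0 1 θ) =
      lapF f (Real.cos θ • x - Real.sin θ • y) (Real.sin θ • x + Real.cos θ • y) := by
    intro θ
    simp only [H, lapF]
    rw [setIntegral_eq_integral_of_forall_compl_eq_zero]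
    · congr 1
      ext ξ
      congr 2
      rw [circleMap_zero, Complex.exp_mul_I]
      simp only [inner_sub_right, inner_add_right, inner_smul_right]
      push_cast
      linear_combination (-2 * Real.pi * (⟪ξ, x⟫ : ℝ) * Complex.sin θ : ℂ) * Complex.I_mul_I
    · intro x hx
      simp [hsupp x hx]
  have hH0 : H 0 = lapF f 0 0 := by
    simp only [H, lapF]
    rw [setIntegral_eq_integral_of_forall_compl_eq_zero]
    · simp
    · intro x hx
      simp [hsupp x hx]
  have hHd : DifferentiableOn ℂ H (ball 0 2) := by
    have hc : Continuous fun p : ℂ × Euc d => (f p.2 : ℂ) *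
      Complex.exp (p.1 * (-2 * Real.pi * Complex.I * (⟪p.2, x⟫ : ℝ) + 2 * Real.pi * (⟪p.2, y⟫ : ℝ))) := by
      fun_prop
    obtain ⟨M, hM⟩ := ((isCompact_closedBall (0:ℂ) 2).prod hD.1).bddAbove_image hc.norm.continuousOn
    -- pass to indicator to have a global bound
    have : H = fun w => ∫ ξ in D, D.indicator (fun ξ => (f ξ : ℂ) *
        Complex.exp (w * (-2 * Real.pi * Complex.I * (⟪ξ, x⟫ : ℝ) + 2 * Real.pi * (⟪ξ, y⟫ : ℝ)))) ξ := by
      ext w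
      exact setIntegral_congr_fun hD.1.measurableSet fun ξ hξ => by simp [hξ]
    rw [this]
    refine hol_integral isOpen_ball ?_ ?_ (b := fun _ => max M 0) ?_ ?_
    · intro w _
      refine AEStronglyMeasurable.indicator ?_ hD.1.measurableSet
      exact (hc.comp (by fun_prop : Continuous fun ξ => (w, ξ))).aestronglyMeasurable
    · intro ξ
      by_cases hξ : ξ ∈ D
      · simp only [indicator_of_mem hξ]
        fun_prop
      · simp only [indicator_of_notMem hξ]
        fun_prop
    · exact integrableOn_const hD.1.measure_ne_top
    · intro w hw ξ
      by_cases hξ : ξ ∈ D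
      · rw [indicator_of_mem hξ]
        exact (hM ⟨(w, ξ), ⟨ball_subset_closedBall hw, hξ⟩, rfl⟩).trans (le_max_left _ _)
      · rw [indicator_of_notMem hξ]
        simp
  have hav : Real.circleAverage (fun w => H w ^ 2) 0 1 = H 0 ^ 2 := by
    apply DiffContOnCl.circleAverage
    apply DifferentiableOn.diffContOnCl
    rw [abs_one, closure_ball _ one_ne_zero]
    exact (hHd.mono (closedBall_subset_ball (by norm_num))).pow 2
  rw [Real.circleAverage_def, intervalIntegral.integral_of_le (by positivity)] at hav
  rw [← hH0, ← enorm_pow, ← hav, enorm_smul]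
  rw [Real.enorm_eq_ofReal (by positivity)]
  gcongr
  refine (enorm_integral_le_lintegral_enorm _).trans (le_of_eq ?_)
  congr 1
  ext θ
  rw [enorm_pow, hH]

/-- a linear involution preserves Lebesgue integrals -/
lemma invol_lintegral {E : Type*} [NormedAddCommGroup E] [NormedSpace ℝ E] [FiniteDimensional ℝ E]
    [MeasurableSpace E] [BorelSpace E] (μ : Measure E) [μ.IsAddHaarMeasure]
    (R : E →ₗ[ℝ] E) (hR : R ∘ₗ R = LinearMap.id) (G : E → ℝ≥0∞) (hG : Measurable G) :
    ∫⁻ p, G (R p) ∂μ = ∫⁻ p, G p ∂μ := by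
  have hdet : LinearMap.det R * LinearMap.det R = 1 := by
    rw [← LinearMap.det_comp, hR, LinearMap.det_id]
  have h0 : LinearMap.det R ≠ 0 := by
    intro h; rw [h] at hdet; simp at hdet
  have habs : |(LinearMap.det R)⁻¹| = 1 := by
    rw [abs_inv, inv_eq_one]
    have : |LinearMap.det R| * |LinearMap.det R| = 1 := by rw [← abs_mul, hdet, abs_one]
    nlinarith [abs_nonneg (LinearMap.det R)]
  have hm := Measure.map_linearMap_addHaar_eq_smul_addHaar (μ := μ) h0
  rw [habs, ENNReal.ofReal_one, one_smul] at hm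
  have hRm : Measurable R := (LinearMap.continuous_of_finiteDimensional R).measurable
  conv_rhs => rw [← hm]
  rw [lintegral_map hG hRm]

/-- the reflection on the product -/
def rotR (d : ℕ) (c s : ℝ) : (Euc d × Euc d) →ₗ[ℝ] (Euc d × Euc d) where
  toFun p := (c • p.1 + s • p.2, s • p.1 - c • p.2)
  map_add' p q := by
    ext i <;> simp <;> ring
  map_smul' a p := by
    ext i <;> simp <;> ring

lemma rotR_invol (d : ℕ) (c s : ℝ) (h : c ^ 2 + s ^ 2 = 1) :
    rotR d c s ∘ₗ rotR d c s = LinearMap.id := by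
  apply LinearMap.ext
  rintro ⟨x, y⟩
  ext i
  · simp [rotR]
    linear_combination (x i) * h
  · simp [rotR]
    linear_combination (y i) * h

lemma santalo_pre {d : ℕ} {D : Set (Euc d)} (hD : IsConvexBody D) (hs : D = -D)
    {f : Euc d → ℝ} (hf : ContDiff ℝ (⊤ : ℕ∞) f) (h0 : ∀ x, 0 ≤ f x) (h1 : ∀ x, f x ≤ 1)
    (hsupp : ∀ x, x ∉ D → f x = 0) (ρ : ℝ) (hρ : 0 < ρ) :
    volume (ρ • polarSet D) ^ 2 * ‖lapF f 0 0‖ₑ ^ 2 ≤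
      volume ((2 * ρ) • polarSet D) *
        ENNReal.ofReal (Real.exp (4 * Real.pi * (2 * ρ)) * (volume D).toReal) := by
  set P := ρ • polarSet D with hP
  have hPm : MeasurableSet P := ((polar_compact hD hs).smul ρ).measurableSet
  set Q := (2 * ρ) • polarSet D with hQ
  have hQm : MeasurableSet Q := ((polar_compact hD hs).smul _).measurableSet
  have hPmem : ∀ y, y ∈ P ↔ ∀ ξ ∈ D, ⟪ξ, y⟫ ≤ ρ := by
    intro y
    rw [hP, mem_smul_set_iff_inv_smul_mem₀ hρ.ne']
    simp only [polarSet, mem_ofPred_eq, inner_smul_right]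
    refine forall₂_congr fun ξ _ => ?_
    rw [inv_mul_le_iff₀ hρ, mul_one]
  have hQmem : ∀ y, y ∈ Q ↔ ∀ ξ ∈ D, ⟪ξ, y⟫ ≤ 2 * ρ := by
    intro y
    rw [hQ, mem_smul_set_iff_inv_smul_mem₀ (by positivity)]
    simp only [polarSet, mem_ofPred_eq, inner_smul_right]
    refine forall₂_congr fun ξ _ => ?_
    rw [inv_mul_le_iff₀ (by positivity), mul_one]
  have hPneg : ∀ y ∈ P, ∀ ξ ∈ D, |⟪ξ, y⟫| ≤ ρ := by
    intro y hy ξ hξ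
    have hξ' : -ξ ∈ D := by rw [hs]; simpa using hξ
    have a1 := (hPmem y).1 hy ξ hξ
    have a2 := (hPmem y).1 hy _ hξ'
    rw [inner_neg_left] at a2
    exact abs_le.2 ⟨by linarith, a1⟩
  have hcont := lapF_cont hD hf.continuous hsupp
  let F : Euc d × Euc d → ℝ≥0∞ := fun p => ‖lapF f p.1 p.2‖ₑ ^ 2
  have hFc : Continuous F := (ENNReal.continuous_pow 2).comp (hcont.enorm)
  set K := volume Q * ENNReal.ofReal (Real.exp (4 * Real.pi * (2 * ρ)) * (volume D).toReal) with hK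
  have hG : ∫⁻ p, (univ ×ˢ Q).indicator F p ≤ K := by
    have hm : Measurable ((univ ×ˢ Q : Set (Euc d × Euc d)).indicator F) :=
      hFc.measurable.indicator (MeasurableSet.univ.prod hQm)
    rw [Measure.volume_eq_prod, lintegral_prod_symm _ hm.aemeasurable]
    calc ∫⁻ y, ∫⁻ x, (univ ×ˢ Q).indicator F (x, y)
        ≤ ∫⁻ y, Q.indicator (fun _ => ENNReal.ofReal
            (Real.exp (4 * Real.pi * (2 * ρ)) * (volume D).toReal)) y := by
          refine lintegral_mono fun y => ?_
          by_cases hy : y ∈ Q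
          · simp only [indicator, mem_prod, mem_univ, true_and, hy, if_true]
            exact lapF_planch hD hf h0 h1 hsupp y _ ((hQmem y).1 hy)
          · simp [indicator, hy]
      _ = K := by
          rw [lintegral_indicator hQm, setLIntegral_const, hK, mul_comm]
  have hθ : ∀ θ : ℝ, ∫⁻ p in P ×ˢ P, F (rotR d (Real.cos θ) (Real.sin θ) p) ≤ K := by
    intro θ
    refine le_trans ?_ hG
    rw [Measure.volume_eq_prod]
    rw [← invol_lintegral ((volume : Measure (Euc d)).prod volume) (rotR d (Real.cos θ) (Real.sin θ))
      (rotR_invol d _ _ (Real.cos_sq_add_sin_sq θ)) _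
      (hFc.measurable.indicator (MeasurableSet.univ.prod hQm))]
    rw [← lintegral_indicator (hPm.prod hPm)]
    refine lintegral_mono fun p => ?_
    by_cases hp : p ∈ P ×ˢ P
    · rw [indicator_of_mem hp, indicator_of_mem]
      refine ⟨mem_univ _, ?_⟩
      rw [hQmem]
      intro ξ hξ
      simp only [rotR, LinearMap.coe_mk, AddHom.coe_mk, inner_sub_right, inner_smul_right]
      have b1 := hPneg _ hp.1 ξ hξ
      have b2 := hPneg _ hp.2 ξ hξ
      have c1 := Real.abs_sin_le_one θ
      have c2 := Real.abs_cos_le_one θ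
      have e1 : |Real.sin θ * ⟪ξ, p.1⟫| ≤ ρ := by
        rw [abs_mul]; nlinarith [abs_nonneg (Real.sin θ), abs_nonneg (⟪ξ, p.1⟫)]
      have e2 : |Real.cos θ * ⟪ξ, p.2⟫| ≤ ρ := by
        rw [abs_mul]; nlinarith [abs_nonneg (Real.cos θ), abs_nonneg (⟪ξ, p.2⟫)]
      linarith [(abs_le.1 e1).2, (abs_le.1 e2).1]
    · rw [indicator_of_notMem hp]; exact bot_le
  have hjm : Measurable fun q : (Euc d × Euc d) × ℝ =>
      F (rotR d (Real.cos q.2) (Real.sin q.2) q.1) := by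
    apply Continuous.measurable
    apply hFc.comp
    simp only [rotR, LinearMap.coe_mk, AddHom.coe_mk]
    fun_prop
  calc volume P ^ 2 * ‖lapF f 0 0‖ₑ ^ 2
      = ∫⁻ p in P ×ˢ P, ‖lapF f 0 0‖ₑ ^ 2 := by
        rw [setLIntegral_const, Measure.volume_eq_prod, Measure.prod_prod]; ring
    _ ≤ ∫⁻ p in P ×ˢ P, ENNReal.ofReal (2 * Real.pi)⁻¹ * ∫⁻ θ in Ioc 0 (2 * Real.pi),
          F (rotR d (Real.cos θ) (Real.sin θ) p) := by
        refine lintegral_mono fun p => ?_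
        refine (lapF_mean hD hf.continuous hsupp p.1 (-p.2)).trans (le_of_eq ?_)
        congr 2
        ext θ
        simp [F, rotR, sub_eq_add_neg]
    _ = ENNReal.ofReal (2 * Real.pi)⁻¹ * ∫⁻ θ in Ioc 0 (2 * Real.pi), ∫⁻ p in P ×ˢ P,
          F (rotR d (Real.cos θ) (Real.sin θ) p) := by
        rw [lintegral_const_mul', lintegral_lintegral_swap]
        · exact hjm.aemeasurable
        · simp
    _ ≤ ENNReal.ofReal (2 * Real.pi)⁻¹ * ∫⁻ θ in Ioc 0 (2 * Real.pi), K := by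
        gcongr with θ
        exact hθ θ
    _ = K := by
        rw [setLIntegral_const, Real.volume_Ioc, sub_zero, mul_comm K, ← mul_assoc,
          ← ENNReal.ofReal_mul (by positivity), inv_mul_cancel₀ (by positivity)]
        simp

/-- weak Santalo inequality -/
lemma santalo {d : ℕ} (hd : 1 ≤ d) {D : Set (Euc d)} (hD : IsConvexBody D) (hs : D = -D) :
    (volume D).toReal * (volume (polarSet D)).toReal * d ^ d ≤ (8 * Real.exp (8 * Real.pi)) ^ d := by
  obtain ⟨f, hf, h0, h1, hone, hsupp⟩ := exists_cutoff hD hs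
  have hdpos : (0:ℝ) < d := by exact_mod_cast hd
  have key := santalo_pre hD hs hf h0 h1 hsupp d hdpos
  have hv := body_vol_pos hD
  have hv' := body_vol_pos (polar_body hD hs)
  have hfin : volume ((2 * (d:ℝ)) • polarSet D) *
        ENNReal.ofReal (Real.exp (4 * Real.pi * (2 * d)) * (volume D).toReal) ≠ ∞ :=
    ENNReal.mul_ne_top ((polar_compact hD hs).smul _).measure_ne_top ENNReal.ofReal_ne_top
  have key2 := ENNReal.toReal_mono hfin key
  simp only [ENNReal.toReal_mul, ENNReal.toReal_pow, toReal_enorm] at key2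
  rw [vol_smul _ hdpos.le, vol_smul _ (by positivity), ENNReal.toReal_ofReal (by positivity)] at key2
  have hl : (1/2:ℝ) ^ d * (volume D).toReal ≤ ‖lapF f 0 0‖ := by
    have e : lapF f 0 0 = ((∫ ξ, f ξ : ℝ) : ℂ) := by
      rw [← integral_complex_ofReal]
      simp [lapF]
    rw [e, Complex.norm_real]
    refine le_trans ?_ (le_abs_self _)
    rw [← vol_smul _ (by norm_num : (0:ℝ) ≤ 1/2)]
    have hm : MeasurableSet ((1/2:ℝ) • D) := (hD.1.smul (1/2:ℝ)).measurableSet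
    have : (volume ((1/2:ℝ) • D)).toReal = ∫ x, ((1/2:ℝ) • D).indicator (fun _ => (1:ℝ)) x := by
      rw [integral_indicator hm, setIntegral_const]; simp [Measure.real]
    rw [this]
    apply integral_mono
    · rw [integrable_indicator_iff hm]
      exact integrableOn_const (hD.1.smul (1/2:ℝ)).measure_ne_top
    · apply hf.continuous.integrable_of_hasCompactSupport
      exact HasCompactSupport.intro hD.1 hsupp
    · intro x
      by_cases hx : x ∈ (1/2:ℝ) • D
      · rw [indicator_of_mem hx, hone x hx]
      · rw [indicator_of_notMem hx]; exact h0 x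
  set v := (volume D).toReal
  set v' := (volume (polarSet D)).toReal
  have h3 : ((d:ℝ) ^ d * v') ^ 2 * ((1/2:ℝ) ^ d * v) ^ 2 ≤
      (2 * (d:ℝ)) ^ d * v' * (Real.exp (4 * Real.pi * (2 * d)) * v) := by
    refine le_trans ?_ key2
    gcongr
  have h4 : Real.exp (4 * Real.pi * (2 * d)) = Real.exp (8 * Real.pi) ^ d := by
    rw [← Real.exp_nat_mul]; congr 1; ring
  rw [h4] at h3
  have h5 : ((d:ℝ) ^ d * v' * v) * (v * v' * d ^ d) ≤
      ((d:ℝ) ^ d * v' * v) * (8 * Real.exp (8 * Real.pi)) ^ d := by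
    have : (4:ℝ)^d * (((d:ℝ) ^ d * v') ^ 2 * ((1/2:ℝ) ^ d * v) ^ 2) = ((d:ℝ) ^ d * v' * v) * (v * v' * d ^ d) := by
      have : (4:ℝ)^d * ((1/2:ℝ)^d)^2 = 1 := by
        rw [← pow_mul, mul_comm d 2, pow_mul, ← mul_pow]; norm_num
      linear_combination ((d:ℝ) ^ d * v') ^ 2 * v^2 * this
    rw [← this]
    refine (mul_le_mul_of_nonneg_left h3 (by positivity)).trans (le_of_eq ?_)
    rw [mul_pow, mul_pow, show (8:ℝ) = 4 * 2 by norm_num, mul_pow]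
    ring
  exact le_of_mul_le_mul_left h5 (by positivity)

/-- matrix of an endomorphism in the standard basis -/
def matR {n : ℕ} (A : Euc n →L[ℝ] Euc n) : Matrix (Fin n) (Fin n) ℝ :=
  LinearMap.toMatrix (EuclideanSpace.basisFun (Fin n) ℝ).toBasis
    (EuclideanSpace.basisFun (Fin n) ℝ).toBasis (A : Euc n →ₗ[ℝ] Euc n)

lemma matR_apply {n : ℕ} (A : Euc n →L[ℝ] Euc n) (i j : Fin n) :
    matR A i j = A (EuclideanSpace.single j 1) i := by
  simp [matR, LinearMap.toMatrix_apply]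

lemma matR_det {n : ℕ} (A : Euc n →L[ℝ] Euc n) : (matR A).det = A.det := by
  rw [matR, LinearMap.det_toMatrix]

lemma matR_add {n : ℕ} (A B : Euc n →L[ℝ] Euc n) : matR (A + B) = matR A + matR B := by
  ext i j; simp [matR_apply]
lemma matR_sub {n : ℕ} (A B : Euc n →L[ℝ] Euc n) : matR (A - B) = matR A - matR B := by
  ext i j; simp [matR_apply]
lemma matR_neg {n : ℕ} (A : Euc n →L[ℝ] Euc n) : matR (-A) = -matR A := by
  ext i j; simp [matR_apply]
lemma matR_smul {n : ℕ} (c : ℝ) (A : Euc n →L[ℝ] Euc n) : matR (c • A) = c • matR A := by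
  ext i j; simp [matR_apply]
lemma matR_one {n : ℕ} : matR (ContinuousLinearMap.id ℝ (Euc n)) = 1 := by
  ext i j
  rw [matR_apply, Matrix.one_apply]
  simp

/-- block endomorphism -/
def blk {n : ℕ} (a b c e : Euc n →L[ℝ] Euc n) : (Euc n × Euc n) →L[ℝ] (Euc n × Euc n) :=
  (a.comp (ContinuousLinearMap.fst ℝ _ _) + b.comp (ContinuousLinearMap.snd ℝ _ _)).prod
    (c.comp (ContinuousLinearMap.fst ℝ _ _) + e.comp (ContinuousLinearMap.snd ℝ _ _))

lemma blk_apply {n : ℕ} (a b c e : Euc n →L[ℝ] Euc n) (p : Euc n × Euc n) :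
    blk a b c e p = (a p.1 + b p.2, c p.1 + e p.2) := rfl

lemma blk_det {n : ℕ} (a b c e : Euc n →L[ℝ] Euc n) :
    (blk a b c e).det = (Matrix.fromBlocks (matR a) (matR b) (matR c) (matR e)).det := by
  let β := (EuclideanSpace.basisFun (Fin n) ℝ).toBasis
  have : LinearMap.toMatrix (β.prod β) (β.prod β) (blk a b c e : (Euc n × Euc n) →ₗ[ℝ] _) =
      Matrix.fromBlocks (matR a) (matR b) (matR c) (matR e) := by
    ext (i | i) (j | j) <;>
      simp [LinearMap.toMatrix_apply, blk_apply, matR_apply, β]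
  rw [← this, LinearMap.det_toMatrix]

/-- complexified determinant -/
def dlt {n : ℕ} (A A' : Euc n →L[ℝ] Euc n) (w : ℂ) : ℂ :=
  (Matrix.fromBlocks ((1/2:ℂ) • (1 + (matR A).map (algebraMap ℝ ℂ)))
    ((w/2) • ((matR A').map (algebraMap ℝ ℂ) - 1))
    (-(w/2) • ((matR A).map (algebraMap ℝ ℂ) - 1))
    ((1/2:ℂ) • (1 + (matR A').map (algebraMap ℝ ℂ)))).det

lemma dlt_real {n : ℕ} (A A' : Euc n →L[ℝ] Euc n) (w : ℝ) :
    dlt A A' w = ((blk ((1/2:ℝ) • (ContinuousLinearMap.id ℝ (Euc n) + A))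
      ((w/2) • (A' - ContinuousLinearMap.id ℝ (Euc n)))
      (-(w/2) • (A - ContinuousLinearMap.id ℝ (Euc n)))
      ((1/2:ℝ) • (ContinuousLinearMap.id ℝ (Euc n) + A'))).det : ℝ) := by
  rw [blk_det, dlt]
  refine Eq.trans ?_ (RingHom.map_det (algebraMap ℝ ℂ) _).symm
  congr 1
  simp only [matR_add, matR_sub, matR_smul, matR_one]
  ext (i | i) (j | j) <;> by_cases h : i = j <;>
    simp [Matrix.one_apply, h]

lemma dlt_I {n : ℕ} (A A' : Euc n →L[ℝ] Euc n) :
    ‖dlt A A' Complex.I‖ = (1/2)^n * |(A + A').det| := by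
  set X := (matR A).map (algebraMap ℝ ℂ) with hX
  set Y := (matR A').map (algebraMap ℝ ℂ) with hY
  have h1 : dlt A A' Complex.I = (X + Y).det * (1/2)^n := by
    have e1 : Matrix.fromBlocks (1 : Matrix (Fin n) (Fin n) ℂ) 0 ((Complex.I/2) • (1 : Matrix (Fin n) (Fin n) ℂ)) 1 *
        (Matrix.fromBlocks (1 : Matrix (Fin n) (Fin n) ℂ) (Complex.I • (1 : Matrix (Fin n) (Fin n) ℂ)) 0 1 *
        Matrix.fromBlocks ((1/2:ℂ) • (1 + X)) ((Complex.I/2) • (Y - 1)) (-(Complex.I/2) • (X - 1))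
          ((1/2:ℂ) • (1 + Y))) =
        Matrix.fromBlocks X (Complex.I • Y) ((Complex.I/2) • (1 : Matrix (Fin n) (Fin n) ℂ)) ((1/2:ℂ) • (1 : Matrix (Fin n) (Fin n) ℂ)) := by
      rw [Matrix.fromBlocks_multiply, Matrix.fromBlocks_multiply]
      have hI := Complex.I_mul_I
      congr 1 <;> ext i j <;> simp
      · linear_combination (-1/2) * (X i j - (1 : Matrix (Fin n) (Fin n) ℂ) i j) * hI
      · ring
      · linear_combination (-Complex.I/4) * (X i j - (1 : Matrix (Fin n) (Fin n) ℂ) i j) * hI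
      · linear_combination (1/2) * (Y i j) * hI
    have e2 := congrArg Matrix.det e1
    rw [Matrix.det_mul, Matrix.det_mul, Matrix.det_fromBlocks_zero₁₂, Matrix.det_fromBlocks_zero₂₁] at e2
    simp only [Matrix.det_one, one_mul, mul_one] at e2
    rw [dlt, ← hX, ← hY, e2]
    have e3 : Matrix.fromBlocks X (Complex.I • Y) ((Complex.I/2) • (1 : Matrix (Fin n) (Fin n) ℂ)) ((1/2:ℂ) • (1 : Matrix (Fin n) (Fin n) ℂ)) =
      Matrix.fromBlocks (1 : Matrix (Fin n) (Fin n) ℂ) 0 0 ((1/2:ℂ) • (1 : Matrix (Fin n) (Fin n) ℂ)) * 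
      Matrix.fromBlocks X (Complex.I • Y) (Complex.I • (1 : Matrix (Fin n) (Fin n) ℂ)) 1 := by
      rw [Matrix.fromBlocks_multiply]
      congr 1 <;> ext i j <;> simp
      ring
    rw [e3, Matrix.det_mul, Matrix.det_fromBlocks_zero₁₂, Matrix.det_fromBlocks_one₂₂, Matrix.det_smul]
    have e4 : X - Complex.I • Y * Complex.I • (1 : Matrix (Fin n) (Fin n) ℂ) = X + Y := by
      ext i j; simp
      linear_combination (-(Y i j)) * Complex.I_mul_I
    rw [e4]
    simp
    ring
  have h2 : (X + Y).det = (((A + A').det : ℝ) : ℂ) := by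
    rw [← matR_det, matR_add]
    refine Eq.trans ?_ (RingHom.map_det (algebraMap ℝ ℂ) _).symm
    congr 1
    ext i j; simp [hX, hY]
  rw [h1, h2]
  simp [Complex.norm_real]
  ring

lemma dlt_cont {n : ℕ} : Continuous fun q : (Euc n →L[ℝ] Euc n) × (Euc n →L[ℝ] Euc n) × ℂ =>
    dlt q.1 q.2.1 q.2.2 := by
  have hm : Continuous fun A : Euc n →L[ℝ] Euc n => (matR A).map (algebraMap ℝ ℂ) := by
    refine continuous_matrix fun i j => ?_
    simp only [Matrix.map_apply, matR_apply]
    have : Continuous fun A : Euc n →L[ℝ] Euc n => A (EuclideanSpace.single j 1) i := by fun_prop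
    exact Complex.continuous_ofReal.comp this
  unfold dlt
  apply Continuous.matrix_det
  have h1 := hm.comp (continuous_fst (X := Euc n →L[ℝ] Euc n) (Y := (Euc n →L[ℝ] Euc n) × ℂ))
  have h2 := hm.comp ((continuous_fst (X := Euc n →L[ℝ] Euc n) (Y := ℂ)).comp (continuous_snd (X := Euc n →L[ℝ] Euc n)))
  simp only [Function.comp_def] at h1 h2
  apply Continuous.matrix_fromBlocks <;> fun_prop

lemma dlt_diff {n : ℕ} (A A' : Euc n →L[ℝ] Euc n) : Differentiable ℂ (dlt A A') := by
  unfold dlt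
  simp only [Matrix.det_apply]
  apply Differentiable.fun_sum
  intro σ _
  apply Differentiable.const_smul
  apply Differentiable.fun_finsetProd
  intro i _
  rcases h : σ i with k | k <;> rcases i with l | l <;> simp

lemma dlt_bdd (n : ℕ) (M : ℝ) : ∃ K, 0 ≤ K ∧ ∀ (A A' : Euc n →L[ℝ] Euc n) (w : ℂ), ‖A‖ ≤ M → ‖A'‖ ≤ M → ‖w‖ ≤ 3 →
    ‖dlt A A' w‖ ≤ K := by
  have : ProperSpace (Euc n →L[ℝ] Euc n) := FiniteDimensional.proper ℝ _
  obtain ⟨K, hK⟩ := ((isCompact_closedBall (0 : Euc n →L[ℝ] Euc n) M).prod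
    ((isCompact_closedBall (0 : Euc n →L[ℝ] Euc n) M).prod (isCompact_closedBall (0:ℂ) 3))).bddAbove_image
    (dlt_cont (n := n)).norm.continuousOn
  refine ⟨max K 0, le_max_right _ _, fun A A' w hA hA' hw => le_max_of_le_left ?_⟩
  exact hK ⟨(A, A', w), ⟨by simpa using hA, by simpa using hA', by simpa using hw⟩, rfl⟩

lemma strong_mono_surj {H : Type*} [NormedAddCommGroup H] [InnerProductSpace ℝ H] [CompleteSpace H]
    (F : H → H) {K κ : ℝ} (hκ : 0 < κ) (hK : κ < K) (hL : ∀ x y, ‖F x - F y‖ ≤ K * ‖x - y‖)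
    (hm : ∀ x y, κ * ‖x - y‖ ^ 2 ≤ ⟪F x - F y, x - y⟫) : Function.Surjective F := by
  intro b
  have hK0 : 0 < K := hκ.trans hK
  set η := κ / K ^ 2 with hη
  have hηp : 0 < η := by positivity
  have hq : 0 ≤ 1 - κ ^ 2 / K ^ 2 := by
    rw [sub_nonneg, div_le_one (by positivity)]; gcongr
  have hq1 : 1 - κ ^ 2 / K ^ 2 < 1 := by
    have : 0 < κ ^ 2 / K ^ 2 := by positivity
    linarith
  let g : H → H := fun x => x - η • (F x - b)
  have hg : ∀ x y, ‖g x - g y‖ ^ 2 ≤ (1 - κ ^ 2 / K ^ 2) * ‖x - y‖ ^ 2 := by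
    intro x y
    have e : g x - g y = (x - y) - η • (F x - F y) := by
      simp only [g]; module
    rw [e, norm_sub_sq_real, norm_smul, real_inner_smul_right, mul_pow, Real.norm_eq_abs, sq_abs,
      real_inner_comm]
    have h1 := hm x y
    have h2 : ‖F x - F y‖ ^ 2 ≤ K ^ 2 * ‖x - y‖ ^ 2 := by
      rw [← mul_pow]; gcongr; exact hL x y
    have h3 : η ^ 2 * ‖F x - F y‖ ^ 2 ≤ η ^ 2 * (K ^ 2 * ‖x - y‖ ^ 2) := by gcongr
    have h4 : η * (κ * ‖x - y‖ ^ 2) ≤ η * ⟪F x - F y, x - y⟫ := by gcongr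
    have h5 : η ^ 2 * K ^ 2 = κ ^ 2 / K ^ 2 := by rw [hη]; field_simp
    have h6 : η * κ = κ ^ 2 / K ^ 2 := by rw [hη]; field_simp
    nlinarith
  have hc : ContractingWith (Real.toNNReal (Real.sqrt (1 - κ ^ 2 / K ^ 2))) g := by
    constructor
    · rw [← NNReal.coe_lt_coe, Real.coe_toNNReal _ (Real.sqrt_nonneg _), NNReal.coe_one,
        Real.sqrt_lt' one_pos]
      simpa using hq1
    · apply LipschitzWith.of_dist_le_mul
      intro x y
      rw [dist_eq_norm, dist_eq_norm, Real.coe_toNNReal _ (Real.sqrt_nonneg _)]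
      refine le_of_sq_le_sq ?_ (by positivity)
      rw [mul_pow, Real.sq_sqrt hq]
      exact hg x y
  have hfix := hc.fixedPoint_isFixedPt
  set x := ContractingWith.fixedPoint g hc
  refine ⟨x, ?_⟩
  have h7 : x - η • (F x - b) = x := hfix
  have h8 : η • (F x - b) = 0 := by simpa using h7
  rcases smul_eq_zero.1 h8 with h | h
  · exact absurd h hηp.ne'
  · exact sub_eq_zero.1 h

lemma det_pos_path {V : Type*} [NormedAddCommGroup V] [NormedSpace ℝ V] [FiniteDimensional ℝ V]
    (L : V →L[ℝ] V) (h : ∀ t ∈ Icc (0:ℝ) 1, ∀ v, (1 - t) • v + t • L v = 0 → v = 0) :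
    0 < L.det := by
  let f : ℝ → ℝ := fun t => ((1 - t) • ContinuousLinearMap.id ℝ V + t • L).det
  have hf : Continuous f := ContinuousLinearMap.continuous_det.comp (by fun_prop)
  have h0 : f 0 = 1 := by simp [f, ContinuousLinearMap.det]
  have h1 : f 1 = L.det := by simp [f]
  have hne : ∀ t ∈ Icc (0:ℝ) 1, f t ≠ 0 := by
    intro t ht hz
    have : LinearMap.ker (((1 - t) • ContinuousLinearMap.id ℝ V + t • L : V →L[ℝ] V) : V →ₗ[ℝ] V) = ⊥ := by
      rw [LinearMap.ker_eq_bot']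
      intro v hv
      exact h t ht v (by simpa using hv)
    have hu := LinearMap.isUnit_iff_ker_eq_bot _ |>.2 this
    have := (LinearMap.isUnit_iff_isUnit_det _).1 hu
    exact this.ne_zero hz
  by_contra hn
  push Not at hn
  rw [← h1] at hn
  obtain ⟨t, ht, h2⟩ := intermediate_value_Icc' (zero_le_one (α := ℝ)) hf.continuousOn
    (show (0:ℝ) ∈ Icc (f 1) (f 0) from ⟨hn, by rw [h0]; exact zero_le_one⟩)
  exact hne t ht h2

/-- the family of maps -/
def Fw {n : ℕ} (T : Euc n → Euc n) (w : ℝ) (p : Euc n × Euc n) : Euc n × Euc n :=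
  ((1/2:ℝ) • (p.1 + T p.1) + (w/2) • (T p.2 - p.2), (1/2:ℝ) • (p.2 + T p.2) - (w/2) • (T p.1 - p.1))

lemma Fw_mono_aux {n : ℕ} {M : ℝ} (hM : 0 ≤ M) {w : ℝ} (hw : |w| * (M + 1) ≤ 1/2)
    (a b Ta Tb : Euc n) (ha : ‖Ta‖ ≤ M * ‖a‖) (hb : ‖Tb‖ ≤ M * ‖b‖) (hma : 0 ≤ ⟪Ta, a⟫) (hmb : 0 ≤ ⟪Tb, b⟫) :
    (1/4) * (‖a‖^2 + ‖b‖^2) ≤ ⟪(1/2:ℝ) • (a + Ta) + (w/2) • (Tb - b), a⟫ +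
      ⟪(1/2:ℝ) • (b + Tb) - (w/2) • (Ta - a), b⟫ := by
  simp only [inner_add_left, inner_sub_left, inner_smul_left, real_inner_self_eq_norm_sq]
  simp only [RCLike.conj_to_real]
  have h1 : |⟪Tb, a⟫| ≤ M * ‖b‖ * ‖a‖ := (abs_real_inner_le_norm _ _).trans (by gcongr)
  have h2 : |⟪Ta, b⟫| ≤ M * ‖a‖ * ‖b‖ := (abs_real_inner_le_norm _ _).trans (by gcongr)
  have h3 : |w * (⟪Tb, a⟫ - ⟪Ta, b⟫)| ≤ |w| * (2 * M * (‖a‖ * ‖b‖)) := by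
    rw [abs_mul]; gcongr
    refine (abs_sub _ _).trans ?_
    linarith
  have h4 : |w| * M ≤ 1/2 := by nlinarith [abs_nonneg w]
  have h5 := (abs_le.1 h3).1
  rw [real_inner_comm b a]
  nlinarith [sq_nonneg (‖a‖ - ‖b‖), mul_nonneg (norm_nonneg a) (norm_nonneg b)]

section
variable {n : ℕ} {T : Euc n → Euc n} {A : Euc n → (Euc n →L[ℝ] Euc n)} {M ε : ℝ}

lemma A_norm (hA : ∀ x, HasFDerivAt T (A x) x) (hM : 0 ≤ M) (hL : ∀ x y, ‖T x - T y‖ ≤ M * ‖x - y‖) (x : Euc n) :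
    ‖A x‖ ≤ M := by
  have : LipschitzWith M.toNNReal T := LipschitzWith.of_dist_le_mul fun x y => by
    rw [dist_eq_norm, dist_eq_norm, Real.coe_toNNReal _ hM]; exact hL x y
  simpa [hM] using (hA x).le_of_lipschitz this

lemma A_mono (hA : ∀ x, HasFDerivAt T (A x) x) (hm : ∀ x y, 0 ≤ ⟪T x - T y, x - y⟫) (x v : Euc n) :
    0 ≤ ⟪A x v, v⟫ := by
  have h1 : HasDerivAt (fun t : ℝ => x + t • v) v 0 := by
    simpa using ((hasDerivAt_id (0:ℝ)).smul_const v).const_add x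
  have h2 : HasDerivAt (fun t : ℝ => T (x + t • v)) (A x v) 0 := by
    have h := (hA (x + (0:ℝ) • v)).comp_hasDerivAt (0:ℝ) h1
    rw [show x + (0:ℝ) • v = x by simp] at h
    exact h
  have h3 : HasDerivAt (fun t : ℝ => ⟪T (x + t • v), v⟫) ⟪A x v, v⟫ 0 := by
    simpa using h2.inner ℝ (hasDerivAt_const (0:ℝ) v)
  have hmono : Monotone (fun t : ℝ => ⟪T (x + t • v), v⟫) := by
    intro s t hst
    rcases hst.eq_or_lt with h | h
    · rw [h]
    have := hm (x + t • v) (x + s • v)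
    rw [show x + t • v - (x + s • v) = (t - s) • v by module, real_inner_smul_right, inner_sub_left] at this
    have h4 : 0 < t - s := sub_pos.2 h
    simp only
    nlinarith
  rw [← h3.deriv]
  exact hmono.deriv_nonneg

lemma Fw_inj (hM : 0 ≤ M) (hL : ∀ x y, ‖T x - T y‖ ≤ M * ‖x - y‖)
    (hm : ∀ x y, 0 ≤ ⟪T x - T y, x - y⟫) {w : ℝ} (hw : |w| * (M + 1) ≤ 1/2) :
    Function.Injective (Fw T w) := by
  intro p q h
  have := Fw_mono_aux hM hw (p.1 - q.1) (p.2 - q.2) (T p.1 - T q.1) (T p.2 - T q.2)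
    (hL _ _) (hL _ _) (hm _ _) (hm _ _)
  have e1 : (1/2:ℝ) • (p.1 - q.1 + (T p.1 - T q.1)) + (w/2) • (T p.2 - T q.2 - (p.2 - q.2)) = 0 := by
    have := sub_eq_zero.2 (congrArg Prod.fst h)
    rw [← this]; simp only [Fw]; module
  have e2 : (1/2:ℝ) • (p.2 - q.2 + (T p.2 - T q.2)) - (w/2) • (T p.1 - T q.1 - (p.1 - q.1)) = 0 := by
    have := sub_eq_zero.2 (congrArg Prod.snd h)
    rw [← this]; simp only [Fw]; module
  rw [e1, e2] at this
  simp only [inner_zero_left, add_zero] at this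
  have h1 : ‖p.1 - q.1‖ = 0 := by
    have := sq_nonneg (‖p.1 - q.1‖)
    have := sq_nonneg (‖p.2 - q.2‖)
    exact pow_eq_zero_iff (two_ne_zero) |>.1 (by linarith)
  have h2 : ‖p.2 - q.2‖ = 0 := by
    have := sq_nonneg (‖p.1 - q.1‖)
    have := sq_nonneg (‖p.2 - q.2‖)
    exact pow_eq_zero_iff (two_ne_zero) |>.1 (by linarith)
  exact Prod.ext (sub_eq_zero.1 (norm_eq_zero.1 h1)) (sub_eq_zero.1 (norm_eq_zero.1 h2))

lemma Fw_surj (hM : 0 ≤ M) (hL : ∀ x y, ‖T x - T y‖ ≤ M * ‖x - y‖)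
    (hm : ∀ x y, 0 ≤ ⟪T x - T y, x - y⟫) {w : ℝ} (hw : |w| * (M + 1) ≤ 1/2) :
    Function.Surjective (Fw T w) := by
  let F : WithLp 2 (Euc n × Euc n) → WithLp 2 (Euc n × Euc n) := fun p =>
    WithLp.toLp 2 (Fw T w (WithLp.ofLp p))
  have hw1 : |w| ≤ 1/2 := by nlinarith [abs_nonneg w]
  have key : Function.Surjective F := by
    refine strong_mono_surj F (κ := 1/4) (K := 4 * (M + 1)) (by norm_num) (by linarith) ?_ ?_
    · intro p q
      refine le_of_sq_le_sq ?_ (by positivity)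
      rw [mul_pow, WithLp.prod_norm_sq_eq_of_L2, WithLp.prod_norm_sq_eq_of_L2]
      simp only [F, WithLp.sub_fst, WithLp.sub_snd]
      set a := ‖p.fst - q.fst‖ with ha
      set b := ‖p.snd - q.snd‖ with hb
      have a1 := hL p.fst q.fst
      have b1 := hL p.snd q.snd
      have n1 : ‖(Fw T w p.ofLp).1 - (Fw T w q.ofLp).1‖ ≤ (M + 1) * (a + b) := by
        have e : (Fw T w p.ofLp).1 - (Fw T w q.ofLp).1 = (1/2:ℝ) • ((p.fst - q.fst) + (T p.fst - T q.fst)) +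
          (w/2) • ((T p.snd - T q.snd) - (p.snd - q.snd)) := by simp only [Fw, WithLp.fst, WithLp.snd]; module
        rw [e]
        refine (norm_add_le _ _).trans ?_
        rw [norm_smul, norm_smul]
        have c1 := norm_add_le (p.fst - q.fst) (T p.fst - T q.fst)
        have c2 := norm_sub_le (T p.snd - T q.snd) (p.snd - q.snd)
        have : ‖w/2‖ ≤ 1 := by rw [norm_div, Real.norm_eq_abs]; norm_num; linarith
        have : ‖(1/2:ℝ)‖ ≤ 1 := by norm_num
        have d1 : ‖(p.fst - q.fst) + (T p.fst - T q.fst)‖ ≤ (M+1) * a := by linarith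
        have d2 : ‖(T p.snd - T q.snd) - (p.snd - q.snd)‖ ≤ (M+1) * b := by linarith
        calc _ ≤ 1 * ((M+1) * a) + 1 * ((M+1)*b) := by gcongr
          _ = _ := by ring
      have n2 : ‖(Fw T w p.ofLp).2 - (Fw T w q.ofLp).2‖ ≤ (M + 1) * (a + b) := by
        have e : (Fw T w p.ofLp).2 - (Fw T w q.ofLp).2 = (1/2:ℝ) • ((p.snd - q.snd) + (T p.snd - T q.snd)) -
          (w/2) • ((T p.fst - T q.fst) - (p.fst - q.fst)) := by simp only [Fw, WithLp.fst, WithLp.snd]; module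
        rw [e]
        refine (norm_sub_le _ _).trans ?_
        rw [norm_smul, norm_smul]
        have c1 := norm_add_le (p.snd - q.snd) (T p.snd - T q.snd)
        have c2 := norm_sub_le (T p.fst - T q.fst) (p.fst - q.fst)
        have : ‖w/2‖ ≤ 1 := by rw [norm_div, Real.norm_eq_abs]; norm_num; linarith
        have : ‖(1/2:ℝ)‖ ≤ 1 := by norm_num
        have d1 : ‖(p.snd - q.snd) + (T p.snd - T q.snd)‖ ≤ (M+1) * b := by linarith
        have d2 : ‖(T p.fst - T q.fst) - (p.fst - q.fst)‖ ≤ (M+1) * a := by linarith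
        calc _ ≤ 1 * ((M+1) * b) + 1 * ((M+1)*a) := by gcongr
          _ = _ := by ring
      have m1 := pow_le_pow_left₀ (norm_nonneg _) n1 2
      have m2 := pow_le_pow_left₀ (norm_nonneg _) n2 2
      refine (add_le_add m1 m2).trans ?_
      have : (a+b)^2 ≤ 2 * (a^2+b^2) := by nlinarith [sq_nonneg (a-b)]
      nlinarith [sq_nonneg a, sq_nonneg b, sq_nonneg (M+1), mul_le_mul_of_nonneg_left this (sq_nonneg (M+1)),
        mul_nonneg (sq_nonneg (M+1)) (add_nonneg (sq_nonneg a) (sq_nonneg b))]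
    · intro p q
      have := Fw_mono_aux hM hw (p.fst - q.fst) (p.snd - q.snd) (T p.fst - T q.fst) (T p.snd - T q.snd)
        (hL _ _) (hL _ _) (hm _ _) (hm _ _)
      rw [WithLp.prod_norm_sq_eq_of_L2, WithLp.prod_inner_apply]
      refine this.trans (le_of_eq ?_)
      congr 2
      · simp only [F, Fw, WithLp.fst, WithLp.snd, WithLp.ofLp_sub, Prod.fst_sub]; module
      · simp only [F, Fw, WithLp.fst, WithLp.snd, WithLp.ofLp_sub, Prod.snd_sub]; module
  intro b
  obtain ⟨p, hp⟩ := key (WithLp.toLp 2 b)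
  exact ⟨WithLp.ofLp p, by simpa [F] using congrArg WithLp.ofLp hp⟩

/-- the derivative of `Fw` -/
def Lw {n : ℕ} (A A' : Euc n →L[ℝ] Euc n) (w : ℝ) : (Euc n × Euc n) →L[ℝ] (Euc n × Euc n) :=
  blk ((1/2:ℝ) • (ContinuousLinearMap.id ℝ (Euc n) + A))
      ((w/2) • (A' - ContinuousLinearMap.id ℝ (Euc n)))
      (-(w/2) • (A - ContinuousLinearMap.id ℝ (Euc n)))
      ((1/2:ℝ) • (ContinuousLinearMap.id ℝ (Euc n) + A'))

lemma Fw_deriv (hA : ∀ x, HasFDerivAt T (A x) x) (w : ℝ) (p : Euc n × Euc n) :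
    HasFDerivAt (Fw T w) (Lw (A p.1) (A p.2) w) p := by
  have f1 : HasFDerivAt (fun p : Euc n × Euc n => p.1) (ContinuousLinearMap.fst ℝ _ _) p := hasFDerivAt_fst
  have f2 : HasFDerivAt (fun p : Euc n × Euc n => p.2) (ContinuousLinearMap.snd ℝ _ _) p := hasFDerivAt_snd
  have t1 : HasFDerivAt (fun p : Euc n × Euc n => T p.1) ((A p.1).comp (ContinuousLinearMap.fst ℝ _ _)) p :=
    (hA p.1).comp p f1
  have t2 : HasFDerivAt (fun p : Euc n × Euc n => T p.2) ((A p.2).comp (ContinuousLinearMap.snd ℝ _ _)) p :=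
    (hA p.2).comp p f2
  have := (((f1.add t1).const_smul (1/2:ℝ)).add ((t2.sub f2).const_smul (w/2))).prodMk
    (((f2.add t2).const_smul (1/2:ℝ)).sub ((t1.sub f1).const_smul (w/2)))
  refine this.congr_fderiv ?_
  ext v i <;> simp [Lw, blk_apply]

lemma Lw_det_pos (hA : ∀ x, HasFDerivAt T (A x) x) (hM : 0 ≤ M) (hL : ∀ x y, ‖T x - T y‖ ≤ M * ‖x - y‖)
    (hm : ∀ x y, 0 ≤ ⟪T x - T y, x - y⟫) {w : ℝ} (hw : |w| * (M + 1) ≤ 1/2) (p : Euc n × Euc n) :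
    0 < (Lw (A p.1) (A p.2) w).det := by
  apply det_pos_path
  rintro t ⟨ht0, ht1⟩ v hv
  have hn : ∀ x u, ‖A x u‖ ≤ M * ‖u‖ := fun x u =>
    ((A x).le_opNorm u).trans (by gcongr; exact A_norm hA hM hL x)
  have := Fw_mono_aux hM hw v.1 v.2 (A p.1 v.1) (A p.2 v.2) (hn _ _) (hn _ _) (A_mono hA hm _ _) (A_mono hA hm _ _)
  have e1 : (1 - t) • v.1 + t • ((1/2:ℝ) • (v.1 + A p.1 v.1) + (w/2) • (A p.2 v.2 - v.2)) = 0 := by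
    refine Eq.trans ?_ (congrArg Prod.fst hv)
    simp [Lw, blk_apply]
  have e2 : (1 - t) • v.2 + t • ((1/2:ℝ) • (v.2 + A p.2 v.2) - (w/2) • (A p.1 v.1 - v.1)) = 0 := by
    refine Eq.trans ?_ (congrArg Prod.snd hv)
    simp [Lw, blk_apply]; module
  set X := (1/2:ℝ) • (v.1 + A p.1 v.1) + (w/2) • (A p.2 v.2 - v.2)
  set Y := (1/2:ℝ) • (v.2 + A p.2 v.2) - (w/2) • (A p.1 v.1 - v.1)
  have i1 := congrArg (fun z => ⟪z, v.1⟫) e1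
  have i2 := congrArg (fun z => ⟪z, v.2⟫) e2
  simp only [inner_add_left, real_inner_smul_left, real_inner_self_eq_norm_sq, inner_zero_left] at i1 i2
  have hs : ‖v.1‖^2 + ‖v.2‖^2 ≤ 0 := by
    have h3 : t * ((1/4) * (‖v.1‖^2 + ‖v.2‖^2)) ≤ t * (⟪X, v.1⟫ + ⟪Y, v.2⟫) := by gcongr
    nlinarith [sq_nonneg ‖v.1‖, sq_nonneg ‖v.2‖, mul_nonneg (sub_nonneg.2 ht1) (add_nonneg (sq_nonneg ‖v.1‖) (sq_nonneg ‖v.2‖))]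
  have z1 : ‖v.1‖ = 0 := pow_eq_zero_iff (two_ne_zero) |>.1 (by linarith [sq_nonneg ‖v.1‖, sq_nonneg ‖v.2‖])
  have z2 : ‖v.2‖ = 0 := pow_eq_zero_iff (two_ne_zero) |>.1 (by linarith [sq_nonneg ‖v.1‖, sq_nonneg ‖v.2‖])
  exact Prod.ext (norm_eq_zero.1 z1) (norm_eq_zero.1 z2)

lemma gauss_prod (n : ℕ) : ∫ p : Euc n × Euc n, Real.exp (-(‖p.1‖^2 + ‖p.2‖^2))
    ∂((volume : Measure (Euc n)).prod volume) = Real.pi ^ n := by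
  have h1 : ∫ x : Euc n, Real.exp (-‖x‖^2) = Real.pi ^ ((n:ℝ) / 2) := by
    have := GaussianFourier.integral_rexp_neg_mul_sq_norm (V := Euc n) (b := 1) one_pos
    simpa using this
  have h2 : ∀ p : Euc n × Euc n, Real.exp (-(‖p.1‖^2 + ‖p.2‖^2)) = Real.exp (-‖p.1‖^2) * Real.exp (-‖p.2‖^2) := by
    intro p; rw [← Real.exp_add]; congr 1; ring
  simp_rw [h2]
  rw [integral_prod_mul (fun x : Euc n => Real.exp (-‖x‖^2)) (fun x : Euc n => Real.exp (-‖x‖^2)), h1, ← Real.rpow_add Real.pi_pos, add_halves, Real.rpow_natCast]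

lemma Phi_real (hA : ∀ x, HasFDerivAt T (A x) x) (hM : 0 ≤ M) (hL : ∀ x y, ‖T x - T y‖ ≤ M * ‖x - y‖)
    (hm : ∀ x y, 0 ≤ ⟪T x - T y, x - y⟫) {w : ℝ} (hw : |w| * (M + 1) ≤ 1/2) :
    ∫ p : Euc n × Euc n, Real.exp (-(‖(Fw T w p).1‖^2 + ‖(Fw T w p).2‖^2)) * (Lw (A p.1) (A p.2) w).det
      ∂((volume : Measure (Euc n)).prod volume) = Real.pi ^ n := by
  have := integral_image_eq_integral_abs_det_fderiv_smul ((volume : Measure (Euc n)).prod volume)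
    MeasurableSet.univ (fun p _ => (Fw_deriv hA w p).hasFDerivWithinAt) (Fw_inj hM hL hm hw).injOn
    (fun p => Real.exp (-(‖p.1‖^2 + ‖p.2‖^2)))
  rw [image_univ, (Fw_surj hM hL hm hw).range_eq, setIntegral_univ, setIntegral_univ, gauss_prod] at this
  rw [this]
  congr 1
  ext p
  rw [abs_of_pos (Lw_det_pos hA hM hL hm hw p), smul_eq_mul, mul_comm]
end

lemma integrable_gauss {n : ℕ} {b : ℝ} (hb : 0 < b) : Integrable (fun x : Euc n => Real.exp (-b * ‖x‖^2)) := by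
  have := GaussianFourier.integrable_cexp_neg_mul_sq_norm_add (V := Euc n) (b := (b:ℂ)) (by simpa using hb) 0 0
  refine this.norm.congr (Filter.Eventually.of_forall fun x => ?_)
  simp only [Complex.norm_exp]
  congr 1
  simp
  left
  norm_cast

/-- quadratic coefficients -/
def cq0 {n : ℕ} (T : Euc n → Euc n) (p : Euc n × Euc n) : ℝ :=
  ‖(1/2:ℝ) • (p.1 + T p.1)‖^2 + ‖(1/2:ℝ) • (p.2 + T p.2)‖^2
def cq1 {n : ℕ} (T : Euc n → Euc n) (p : Euc n × Euc n) : ℝ :=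
  ⟪(1/2:ℝ) • (p.1 + T p.1), T p.2 - p.2⟫ - ⟪(1/2:ℝ) • (p.2 + T p.2), T p.1 - p.1⟫
def cq2 {n : ℕ} (T : Euc n → Euc n) (p : Euc n × Euc n) : ℝ :=
  (‖T p.1 - p.1‖^2 + ‖T p.2 - p.2‖^2) / 4

lemma cq_real {n : ℕ} (T : Euc n → Euc n) (p : Euc n × Euc n) (w : ℝ) :
    ‖(Fw T w p).1‖^2 + ‖(Fw T w p).2‖^2 = cq0 T p + w * cq1 T p + w^2 * cq2 T p := by
  simp only [Fw, cq0, cq1, cq2]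
  rw [norm_add_sq_real, norm_sub_sq_real, real_inner_smul_right, real_inner_smul_right,
    norm_smul (w/2), norm_smul (w/2), mul_pow, mul_pow, Real.norm_eq_abs, sq_abs]
  ring

lemma cq_I {n : ℕ} (T : Euc n → Euc n) (p : Euc n × Euc n) :
    cq0 T p - cq2 T p = ⟪T p.1, p.1⟫ + ⟪T p.2, p.2⟫ := by
  simp only [cq0, cq2]
  rw [norm_smul, norm_smul, mul_pow, mul_pow, norm_add_sq_real, norm_add_sq_real, norm_sub_sq_real,
    norm_sub_sq_real, real_inner_comm p.1, real_inner_comm p.2]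
  norm_num
  ring

/-- the holomorphic integrand -/
def phiI {n : ℕ} (T : Euc n → Euc n) (A : Euc n → (Euc n →L[ℝ] Euc n)) (w : ℂ) (p : Euc n × Euc n) : ℂ :=
  Complex.exp (-((cq0 T p : ℂ) + w * (cq1 T p : ℂ) + w^2 * (cq2 T p : ℂ))) * dlt (A p.1) (A p.2) w

section
variable {n : ℕ} {T : Euc n → Euc n} {A : Euc n → (Euc n →L[ℝ] Euc n)} {M ε : ℝ}

lemma phiI_real (w : ℝ) (p : Euc n × Euc n) : phiI T A w p =
    ((Real.exp (-(‖(Fw T w p).1‖^2 + ‖(Fw T w p).2‖^2)) * (Lw (A p.1) (A p.2) w).det : ℝ) : ℂ) := by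
  rw [phiI, dlt_real, cq_real]
  push_cast
  rfl

lemma phiI_I (p : Euc n × Euc n) : ‖phiI T A Complex.I p‖ =
    Real.exp (-(⟪T p.1, p.1⟫ + ⟪T p.2, p.2⟫)) * ((1/2)^n * |(A p.1 + A p.2).det|) := by
  rw [phiI, norm_mul, dlt_I, Complex.norm_exp, ← cq_I]
  congr 2
  simp [Complex.I_sq]
  ring

lemma growth (hε : 0 < ε) (hM : 0 ≤ M) (hL : ∀ x y, ‖T x - T y‖ ≤ M * ‖x - y‖)
    (hm : ∀ x y, ε * ‖x - y‖^2 ≤ ⟪T x - T y, x - y⟫) : ∃ δ K : ℝ, 0 < δ ∧ δ ≤ 1 ∧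
    ∀ w : ℂ, |w.re| < δ → |w.im| < 1 + δ → ∀ p : Euc n × Euc n,
      (ε/4) * (‖p.1‖^2 + ‖p.2‖^2) - K ≤
        ((cq0 T p : ℂ) + w * (cq1 T p : ℂ) + w^2 * (cq2 T p : ℂ)).re := by
  set c := ‖T 0‖ + M + 1 with hc
  have hcpos : 0 < c := by positivity
  set δ := min 1 (ε / (16 * c^2)) with hδ
  have hδ0 : 0 < δ := by positivity
  have hδ1 : δ ≤ 1 := min_le_left _ _
  have hδ2 : δ * (16 * c^2) ≤ ε := by
    rw [← le_div_iff₀ (by positivity)]; exact min_le_right _ _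
  refine ⟨δ, ‖T 0‖^2/ε + ε, hδ0, hδ1, fun w hw1 hw2 p => ?_⟩
  have hT : ∀ x, ‖T x‖ ≤ ‖T 0‖ + M * ‖x‖ := by
    intro x
    have := hL x 0
    have h2 := norm_le_norm_add_norm_sub (T 0) (T x)
    rw [sub_zero] at this
    rw [norm_sub_rev] at h2
    linarith
  have hP : ∀ x, ‖(1/2:ℝ) • (x + T x)‖ ≤ c * (1 + ‖x‖) := by
    intro x
    rw [norm_smul]
    have := norm_add_le x (T x)
    have := hT x
    norm_num
    nlinarith [norm_nonneg x, norm_nonneg (T 0), norm_nonneg (x + T x)]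
  have hG : ∀ x, ‖T x - x‖ ≤ c * (1 + ‖x‖) := by
    intro x
    have := norm_sub_le (T x) x
    have := hT x
    nlinarith [norm_nonneg x, norm_nonneg (T 0)]
  have hmon : ∀ x, ε/2 * ‖x‖^2 - ‖T 0‖^2/(2*ε) ≤ ⟪T x, x⟫ := by
    intro x
    have h1 := hm x 0
    rw [sub_zero, inner_sub_left] at h1
    have h2 := (abs_le.1 (abs_real_inner_le_norm (T 0) x)).1
    have h3 : ‖T 0‖ * ‖x‖ ≤ ε/2 * ‖x‖^2 + ‖T 0‖^2/(2*ε) := by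
      have : ε/2 * ‖x‖^2 + ‖T 0‖^2/(2*ε) - ‖T 0‖ * ‖x‖ = (ε * ‖x‖ - ‖T 0‖)^2/(2*ε) := by
        field_simp; ring
      have : 0 ≤ (ε * ‖x‖ - ‖T 0‖)^2/(2*ε) := by positivity
      linarith
    linarith
  set r := ‖p.1‖^2 + ‖p.2‖^2 with hr
  have hr0 : 0 ≤ r := by positivity
  have e1 : c * (1 + ‖p.1‖) * (c * (1 + ‖p.2‖)) ≤ c^2 * (2 + r) := by
    have : (1 + ‖p.1‖) * (1 + ‖p.2‖) ≤ 2 + r := by nlinarith [sq_nonneg (‖p.1‖ - ‖p.2‖), sq_nonneg (‖p.1‖ - 1), sq_nonneg (‖p.2‖ - 1)]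
    nlinarith [mul_le_mul_of_nonneg_left this (sq_nonneg c)]
  have hq1 : |cq1 T p| ≤ c^2 * (4 + 2 * r) := by
    have a1 : |⟪(1/2:ℝ) • (p.1 + T p.1), T p.2 - p.2⟫| ≤ c * (1 + ‖p.1‖) * (c * (1 + ‖p.2‖)) :=
      (abs_real_inner_le_norm _ _).trans (mul_le_mul (hP _) (hG _) (norm_nonneg _) (by positivity))
    have a2 : |⟪(1/2:ℝ) • (p.2 + T p.2), T p.1 - p.1⟫| ≤ c * (1 + ‖p.2‖) * (c * (1 + ‖p.1‖)) :=
      (abs_real_inner_le_norm _ _).trans (mul_le_mul (hP _) (hG _) (norm_nonneg _) (by positivity))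
    refine (abs_sub _ _).trans ?_
    nlinarith
  have hq2 : cq2 T p ≤ c^2 * (4 + 2 * r) / 4 := by
    have a1 := pow_le_pow_left₀ (norm_nonneg _) (hG p.1) 2
    have a2 := pow_le_pow_left₀ (norm_nonneg _) (hG p.2) 2
    have : (1 + ‖p.1‖)^2 + (1+‖p.2‖)^2 ≤ 4 + 2 * r := by nlinarith [sq_nonneg (‖p.1‖ - 1), sq_nonneg (‖p.2‖ - 1)]
    have := mul_le_mul_of_nonneg_left this (sq_nonneg c)
    simp only [cq2]
    nlinarith
  have hq20 : 0 ≤ cq2 T p := by simp only [cq2]; positivity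
  have hre : ((cq0 T p : ℂ) + w * (cq1 T p : ℂ) + w^2 * (cq2 T p : ℂ)).re =
      (cq0 T p - cq2 T p) + w.re * cq1 T p + (1 + w.re^2 - w.im^2) * cq2 T p := by
    simp [pow_two]; ring
  rw [hre, cq_I]
  have m1 := hmon p.1
  have m2 := hmon p.2
  have b1 : -(δ * (c^2 * (4 + 2*r))) ≤ w.re * cq1 T p := by
    have : |w.re * cq1 T p| ≤ δ * (c^2 * (4 + 2*r)) := by
      rw [abs_mul]; exact mul_le_mul hw1.le hq1 (abs_nonneg _) hδ0.le
    exact (abs_le.1 this).1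
  have b2 : -(3 * δ) ≤ 1 + w.re^2 - w.im^2 := by
    have : w.im^2 ≤ (1+δ)^2 := by rw [← sq_abs]; gcongr
    nlinarith [sq_nonneg w.re]
  have b3 : -(δ * (c^2 * (4 + 2*r))) ≤ (1 + w.re^2 - w.im^2) * cq2 T p := by
    have a1 := mul_le_mul_of_nonneg_right b2 hq20
    have a2 := mul_le_mul_of_nonneg_left hq2 hδ0.le
    have a3 : 0 ≤ δ * (c^2 * (4 + 2*r)) := by positivity
    linarith
  have b4 : δ * (c^2 * (4 + 2*r)) ≤ ε/16 * (4 + 2*r) := by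
    have := mul_le_mul_of_nonneg_right hδ2 (by positivity : 0 ≤ 4 + 2*r)
    linarith
  have b5 : ‖T 0‖^2/(2*ε) + ‖T 0‖^2/(2*ε) = ‖T 0‖^2/ε := by field_simp; ring
  have b6 : r = ‖p.1‖^2 + ‖p.2‖^2 := rfl
  have b7 : ε/2 * ‖p.1‖^2 + ε/2 * ‖p.2‖^2 = ε/2 * r := by rw [b6]; ring
  have b8 : ε/16 * (4 + 2*r) = ε/4 + ε/8 * r := by ring
  have b9 : 0 ≤ ε * r := by positivity
  linarith

lemma phi_cont (hT : Continuous T) (hAc : Continuous A) (w : ℂ) : Continuous (phiI T A w) := by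
  unfold phiI
  have h0 : Continuous fun p : Euc n × Euc n => (A p.1, A p.2, w) :=
    (hAc.comp continuous_fst).prodMk ((hAc.comp continuous_snd).prodMk continuous_const)
  have h1 : Continuous fun p : Euc n × Euc n => dlt (A p.1) (A p.2) w := by
    have h := (dlt_cont (n := n)).comp h0
    simp only [Function.comp_def] at h
    exact h
  have h2 : Continuous (cq0 T) := by unfold cq0; fun_prop
  have h3 : Continuous (cq1 T) := by unfold cq1; fun_prop
  have h4 : Continuous (cq2 T) := by unfold cq2; fun_prop
  fun_prop

lemma Phi_I (hA : ∀ x, HasFDerivAt T (A x) x) (hAc : Continuous A) (hε : 0 < ε) (hM : 0 ≤ M)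
    (hL : ∀ x y, ‖T x - T y‖ ≤ M * ‖x - y‖)
    (hm : ∀ x y, ε * ‖x - y‖^2 ≤ ⟪T x - T y, x - y⟫) :
    ∫ p, phiI T A Complex.I p ∂((volume : Measure (Euc n)).prod volume) = (Real.pi : ℂ) ^ n := by
  have hTc : Continuous T := continuous_iff_continuousAt.2 fun x => (hA x).continuousAt
  have hm0 : ∀ x y, 0 ≤ ⟪T x - T y, x - y⟫ := fun x y => le_trans (by positivity) (hm x y)
  obtain ⟨δ, K, hδ0, hδ1, hgr⟩ := growth hε hM hL hm
  obtain ⟨K', hK'0, hK'⟩ := dlt_bdd n M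
  let U : Set ℂ := Complex.re ⁻¹' (Ioo (-δ) δ) ∩ Complex.im ⁻¹' (Ioo (-(1+δ)) (1+δ))
  have hUo : IsOpen U := (isOpen_Ioo.preimage Complex.continuous_re).inter (isOpen_Ioo.preimage Complex.continuous_im)
  have hUc : Convex ℝ U := ((convex_Ioo _ _).linear_preimage Complex.reLm).inter
    ((convex_Ioo _ _).linear_preimage Complex.imLm)
  let Φ : ℂ → ℂ := fun w => ∫ p, phiI T A w p ∂((volume : Measure (Euc n)).prod volume)
  have hΦ : DifferentiableOn ℂ Φ U := by
    refine hol_integral hUo (b := fun p => (Real.exp K * K') * (Real.exp (-(ε/4) * ‖p.1‖^2) * Real.exp (-(ε/4) * ‖p.2‖^2))) ?_ ?_ ?_ ?_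
    · intro w _
      exact (phi_cont hTc hAc w).aestronglyMeasurable
    · intro p
      have := dlt_diff (A p.1) (A p.2)
      unfold phiI
      exact Differentiable.differentiableOn (by fun_prop)
    · apply Integrable.const_mul
      have hi : Integrable (fun x : Euc n => Real.exp (-(ε/4) * ‖x‖^2)) :=
        integrable_gauss (by positivity)
      exact hi.mul_prod hi
    · intro w hw p
      have hw1 : |w.re| < δ := abs_lt.2 hw.1
      have hw2 : |w.im| < 1 + δ := abs_lt.2 hw.2
      have g := hgr w hw1 hw2 p
      rw [phiI, norm_mul, Complex.norm_exp]
      have hwn : ‖w‖ ≤ 3 := (Complex.norm_le_abs_re_add_abs_im w).trans (by linarith)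
      have d := hK' (A p.1) (A p.2) w (A_norm hA hM hL _) (A_norm hA hM hL _) hwn
      calc _ ≤ Real.exp (K + (-(ε/4) * ‖p.1‖^2 + -(ε/4) * ‖p.2‖^2)) * K' := by
            gcongr
            rw [Complex.neg_re]; linarith
        _ = _ := by rw [Real.exp_add, Real.exp_add]; ring
  have han : AnalyticOnNhd ℂ Φ U := hΦ.analyticOnNhd hUo
  have hcst : AnalyticOnNhd ℂ (fun _ : ℂ => (Real.pi : ℂ) ^ n) U := analyticOnNhd_const
  have h0 : (0:ℂ) ∈ U := by
    simp only [U, mem_inter_iff, mem_preimage, Complex.zero_re, Complex.zero_im, mem_Ioo]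
    refine ⟨⟨?_, ?_⟩, ?_, ?_⟩ <;> linarith
  have hI : Complex.I ∈ U := by
    simp only [U, mem_inter_iff, mem_preimage, Complex.I_re, Complex.I_im, mem_Ioo]
    refine ⟨⟨?_, ?_⟩, ?_, ?_⟩ <;> linarith
  have hreal : ∀ w : ℝ, |w| * (M + 1) ≤ 1/2 → Φ w = (Real.pi : ℂ) ^ n := by
    intro w hw
    simp only [Φ, phiI_real]
    rw [integral_complex_ofReal, Phi_real hA hM hL hm0 hw]
    push_cast; rfl
  have hfreq : ∃ᶠ w in nhdsWithin (0:ℂ) {0}ᶜ, Φ w = (Real.pi : ℂ) ^ n := by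
    have ht : Filter.Tendsto (fun k : ℕ => (((1:ℝ) / ((k:ℝ) + 1) : ℝ) : ℂ)) Filter.atTop (nhdsWithin (0:ℂ) {0}ᶜ) := by
      rw [tendsto_nhdsWithin_iff]
      constructor
      · have := (Complex.continuous_ofReal.tendsto 0).comp (tendsto_one_div_add_atTop_nhds_zero_nat (𝕜 := ℝ))
        simpa [Function.comp_def] using this
      · refine Filter.Eventually.of_forall fun k => ?_
        simp only [mem_compl_iff, mem_singleton_iff, Complex.ofReal_eq_zero]
        positivity
    apply ht.frequently
    apply Filter.Eventually.frequently
    have : ∀ᶠ k : ℕ in Filter.atTop, 2 * (M + 1) ≤ (k : ℝ) := tendsto_natCast_atTop_atTop.eventually_ge_atTop _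
    filter_upwards [this] with k hk
    apply hreal
    rw [abs_of_pos (by positivity), div_mul_eq_mul_div, one_mul, div_le_div_iff₀ (by positivity) (by norm_num)]
    linarith
  exact han.eqOn_of_preconnected_of_frequently_eq hcst hUc.isPreconnected h0 hfreq hI

/-- C0 -/
lemma key_C0 (hA : ∀ x, HasFDerivAt T (A x) x) (hAc : Continuous A) (hε : 0 < ε) (hM : 0 ≤ M)
    (hL : ∀ x y, ‖T x - T y‖ ≤ M * ‖x - y‖)
    (hm : ∀ x y, ε * ‖x - y‖^2 ≤ ⟪T x - T y, x - y⟫) :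
    ENNReal.ofReal ((2 * Real.pi) ^ n) ≤ ∫⁻ p : Euc n × Euc n, ENNReal.ofReal |(A p.1 + A p.2).det| *
      ENNReal.ofReal (Real.exp (-(⟪T p.1, p.1⟫ + ⟪T p.2, p.2⟫)))
      ∂((volume : Measure (Euc n)).prod volume) := by
  have h1 := enorm_integral_le_lintegral_enorm (μ := (volume : Measure (Euc n)).prod volume) (phiI T A Complex.I)
  rw [Phi_I hA hAc hε hM hL hm] at h1
  have h2 : ‖(Real.pi : ℂ) ^ n‖ₑ = ENNReal.ofReal (Real.pi ^ n) := by
    rw [← ofReal_norm, norm_pow, Complex.norm_real, Real.norm_eq_abs, abs_of_pos Real.pi_pos]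
  rw [h2] at h1
  rw [mul_pow, ENNReal.ofReal_mul (by positivity)]
  refine (mul_le_mul_right h1 _).trans ?_
  rw [← lintegral_const_mul']
  · refine lintegral_mono fun p => ?_
    rw [← ofReal_norm, phiI_I, ← ENNReal.ofReal_mul (by positivity), ← ENNReal.ofReal_mul (by positivity)]
    apply ENNReal.ofReal_le_ofReal
    have : (2:ℝ)^n * (1/2)^n = 1 := by rw [← mul_pow]; norm_num
    apply le_of_eq
    linear_combination (Real.exp (-(⟪T p.1, p.1⟫ + ⟪T p.2, p.2⟫)) * |(A p.1 + A p.2).det|) * this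
  · exact ENNReal.ofReal_ne_top
end

section
variable {n : ℕ} {K : Set (Euc n)}

lemma body_nhds (hK : IsConvexBody K) (hs : K = -K) : K ∈ nhds (0 : Euc n) :=
  mem_interior_iff_mem_nhds.1 (zero_mem_int hK hs)

lemma body_neg (hs : K = -K) {x : Euc n} (hx : x ∈ K) : -x ∈ K := by
  rw [hs]; simpa using hx

lemma lint_gauge (hK : IsConvexBody K) (hs : K = -K) {a : ℝ} (ha : 0 < a) :
    ∫⁻ x, ENNReal.ofReal (Real.exp (-(a * gauge K x))) ≤
      ENNReal.ofReal (n.factorial * ((a⁻¹) ^ n * (volume K).toReal)) := by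
  have hnh := body_nhds hK hs
  have habs : Absorbent ℝ K := absorbent_nhds_zero hnh
  let g : Euc n → ℝ := fun x => a * gauge K x
  have key := measure_lt_one_eq_integral_div_gamma (volume : Measure (Euc n)) (g := g) (by simp [g])
    (fun x => by simp only [g]; rw [gauge_neg (fun x hx => body_neg hs hx)])
    (fun x y => by simp only [g]; rw [← mul_add]; gcongr; exact gauge_add_le hK.2.1 habs x y)
    (fun {x} hx => by
      have : gauge K x = 0 := by
        rcases mul_eq_zero.1 hx with h | h
        · exact absurd h ha.ne'
        · exact h
      exact (gauge_eq_zero habs ((NormedSpace.isVonNBounded_iff ℝ).2 hK.1.isBounded)).1 this)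
    (fun r x => by
      have h1 : gauge K (r • x) = |r| * gauge K x := by
        rcases le_total 0 r with h | h
        · rw [gauge_smul_of_nonneg h, abs_of_nonneg h, smul_eq_mul]
        · rw [← gauge_neg (fun x hx => body_neg hs hx), ← neg_smul, gauge_smul_of_nonneg (by linarith), abs_of_nonpos h, smul_eq_mul]
      simp only [g]; rw [h1]; apply le_of_eq; ring) (p := 1) one_pos
  simp only [Real.rpow_one, div_one, finrank_euclideanSpace, Fintype.card_fin, Real.Gamma_nat_eq_factorial] at key
  have hsub : {x | g x < 1} ⊆ a⁻¹ • K := by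
    intro x hx
    rw [mem_inv_smul_set_iff₀ ha.ne']
    have : gauge K (a • x) < 1 := by
      rw [gauge_smul_of_nonneg ha.le]; exact hx
    exact setOfPred_gauge_lt_one_subset_self hK.2.1 (interior_subset (zero_mem_int hK hs)) habs this
  have hpos : 0 < volume {x | g x < 1} := by
    apply IsOpen.measure_pos
    · exact isOpen_lt (continuous_const.mul (continuous_gauge hK.2.1 hnh)) continuous_const
    · exact ⟨0, by simp [g]⟩
  have hne : (∫ x, Real.exp (-g x)) ≠ 0 := by
    intro h
    rw [key, h] at hpos
    simp at hpos
  have hintg : Integrable (fun x => Real.exp (-g x)) := by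
    by_contra h
    exact hne (integral_undef h)
  rw [← ofReal_integral_eq_lintegral_ofReal hintg (Filter.Eventually.of_forall fun x => (Real.exp_pos _).le)]
  apply ENNReal.ofReal_le_ofReal
  have h3 : volume {x | g x < 1} ≤ volume (a⁻¹ • K) := measure_mono hsub
  have h4 := ENNReal.toReal_mono (hK.1.smul a⁻¹).measure_ne_top h3
  rw [key, ENNReal.toReal_ofReal (div_nonneg (integral_nonneg fun x => (Real.exp_pos _).le) (by positivity)),
    vol_smul _ (by positivity), div_le_iff₀ (by positivity)] at h4
  rw [mul_comm]; exact h4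

/-- gauge of the polar versus the net -/
lemma gauge_polar_net (hK : IsConvexBody K) (hs : K = -K) {m : ℕ} (y : Fin m → Euc n)
    (hcov : K ⊆ ⋃ i, y i +ᵥ (1/2:ℝ) • K) (x : Euc n) :
    ∃ j, gauge (polarSet K) x / 2 ≤ ⟪y j, x⟫ := by
  have h0 : (0 : Euc n) ∈ K := interior_subset (zero_mem_int hK hs)
  obtain ⟨z, hz, hmax⟩ := hK.1.exists_isMaxOn ⟨0, h0⟩ (f := fun z => ⟪z, x⟫) (by fun_prop)
  set s := ⟪z, x⟫ with hsdef
  have hs0 : 0 ≤ s := by simpa using hmax h0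
  have hg : gauge (polarSet K) x ≤ s := by
    apply le_of_forall_gt_imp_ge_of_dense
    intro a ha
    have ha0 : 0 < a := lt_of_le_of_lt hs0 ha
    apply gauge_le_of_mem ha0.le
    rw [mem_smul_set_iff_inv_smul_mem₀ ha0.ne']
    intro u hu
    rw [real_inner_smul_right, inv_mul_le_iff₀ ha0, mul_one]
    exact (hmax hu).trans ha.le
  obtain ⟨j, hj⟩ := mem_iUnion.1 (hcov hz)
  obtain ⟨_, ⟨u, hu, rfl⟩, hz'⟩ := hj
  refine ⟨j, ?_⟩
  have h1 : ⟪u, x⟫ ≤ s := hmax hu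
  have h2 : s = ⟪y j, x⟫ + 1/2 * ⟪u, x⟫ := by
    rw [hsdef, ← hz']
    simp only [vadd_eq_add]
    rw [inner_add_left, real_inner_smul_left]
  linarith
end

section
variable {n m : ℕ}

/-- log-sum-exp -/
def lse (y : Fin m → Euc n) (x : Euc n) : ℝ := Real.log (∑ i, Real.exp ⟪x, y i⟫)
/-- softmax weights -/
def smx (y : Fin m → Euc n) (i : Fin m) (x : Euc n) : ℝ := Real.exp (⟪x, y i⟫ - lse y x)
/-- softmax barycenter -/
def sT (y : Fin m → Euc n) (x : Euc n) : Euc n := ∑ i, smx y i x • y i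

variable (y : Fin m → Euc n)

lemma sumexp_pos (hm : 0 < m) (x : Euc n) : 0 < ∑ i, Real.exp ⟪x, y i⟫ := by
  have : Nonempty (Fin m) := ⟨⟨0, hm⟩⟩
  exact Finset.sum_pos (fun i _ => Real.exp_pos _) Finset.univ_nonempty

lemma smx_sum (hm : 0 < m) (x : Euc n) : ∑ i, smx y i x = 1 := by
  simp only [smx, Real.exp_sub, lse, Real.exp_log (sumexp_pos y hm x)]
  rw [← Finset.sum_div, div_self (sumexp_pos y hm x).ne']

lemma lse_ge (hm : 0 < m) (x : Euc n) (j : Fin m) : ⟪x, y j⟫ ≤ lse y x := by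
  rw [lse, Real.le_log_iff_exp_le (sumexp_pos y hm x)]
  exact Finset.single_le_sum (f := fun i => Real.exp ⟪x, y i⟫) (fun i _ => (Real.exp_pos _).le) (Finset.mem_univ j)

lemma sT_mem (hm : 0 < m) {K : Set (Euc n)} (hK : Convex ℝ K) (hy : ∀ i, y i ∈ K) (x : Euc n) : sT y x ∈ K :=
  hK.sum_mem (fun i _ => (Real.exp_pos _).le) (smx_sum y hm x) (fun i _ => hy i)

lemma sT_mono (hm : 0 < m) (x z : Euc n) : 0 ≤ ⟪sT y x - sT y z, x - z⟫ := by
  have h1 : ⟪sT y x - sT y z, x - z⟫ = ∑ i, (smx y i x - smx y i z) * (⟪x, y i⟫ - ⟪z, y i⟫) := by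
    rw [sT, sT, ← Finset.sum_sub_distrib, sum_inner]
    refine Finset.sum_congr rfl fun i _ => ?_
    rw [← sub_smul, real_inner_smul_left, inner_sub_right, real_inner_comm x, real_inner_comm z]
  have h2 : ∑ i, (smx y i x - smx y i z) * (lse y x - lse y z) = 0 := by
    rw [← Finset.sum_mul, Finset.sum_sub_distrib, smx_sum y hm, smx_sum y hm]; simp
  have h3 : ∑ i, (smx y i x - smx y i z) * (⟪x, y i⟫ - ⟪z, y i⟫) =
      ∑ i, ((smx y i x - smx y i z) * (⟪x, y i⟫ - ⟪z, y i⟫) -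
        (smx y i x - smx y i z) * (lse y x - lse y z)) := by
    rw [Finset.sum_sub_distrib, h2, sub_zero]
  rw [h1, h3]
  apply Finset.sum_nonneg
  intro i _
  rw [← mul_sub]
  have e : ⟪x, y i⟫ - ⟪z, y i⟫ - (lse y x - lse y z) = (⟪x, y i⟫ - lse y x) - (⟪z, y i⟫ - lse y z) := by ring
  rw [e, smx, smx]
  rcases le_total (⟪x, y i⟫ - lse y x) (⟪z, y i⟫ - lse y z) with h | h
  · exact mul_nonneg_of_nonpos_of_nonpos (sub_nonpos.2 (Real.exp_le_exp.2 h)) (sub_nonpos.2 h)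
  · exact mul_nonneg (sub_nonneg.2 (Real.exp_le_exp.2 h)) (sub_nonneg.2 h)

lemma sT_ge (hm : 0 < m) (x : Euc n) (j : Fin m) : ⟪y j, x⟫ - Real.log m ≤ ⟪sT y x, x⟫ := by
  have hmp : (0:ℝ) < m := by exact_mod_cast hm
  have h1 : ⟪sT y x, x⟫ = ∑ i, smx y i x * ⟪x, y i⟫ := by
    rw [sT, sum_inner]
    refine Finset.sum_congr rfl fun i _ => ?_
    rw [real_inner_smul_left, real_inner_comm]
  have h2 : ∀ i, smx y i x * (lse y x - Real.log m) + (smx y i x - (m:ℝ)⁻¹) ≤ smx y i x * ⟪x, y i⟫ := by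
    intro i
    have hp : 0 < smx y i x := Real.exp_pos _
    have := Real.one_sub_inv_le_log_of_pos (mul_pos hp hmp)
    rw [Real.log_mul hp.ne' hmp.ne', smx, Real.log_exp, ← smx] at this
    have h3 := mul_le_mul_of_nonneg_left this hp.le
    have h4 : smx y i x * (1 - (smx y i x * m)⁻¹) = smx y i x - (m:ℝ)⁻¹ := by field_simp
    rw [h4] at h3
    linarith
  have h3 := Finset.sum_le_sum (fun i (_ : i ∈ Finset.univ) => h2 i)
  rw [Finset.sum_add_distrib, ← Finset.sum_mul, Finset.sum_sub_distrib, smx_sum y hm, ← h1] at h3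
  simp only [Finset.sum_const, Finset.card_univ, Fintype.card_fin, nsmul_eq_mul] at h3
  rw [mul_inv_cancel₀ hmp.ne'] at h3
  have := lse_ge y hm x j
  rw [real_inner_comm] at this
  linarith

lemma sT_contDiff (hm : 0 < m) : ContDiff ℝ 1 (sT y) := by
  have h1 : ContDiff ℝ 1 (lse y) := by
    unfold lse
    apply ContDiff.log
    · apply ContDiff.sum
      intro i _
      exact (contDiff_id.inner ℝ contDiff_const).exp
    · intro x; exact (sumexp_pos y hm x).ne'
  unfold sT
  apply ContDiff.sum
  intro i _
  unfold smx
  exact (((contDiff_id.inner ℝ contDiff_const).sub h1).exp).smul contDiff_const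

lemma sT_lip (hm : 0 < m) {R : ℝ} (hR : ∀ i, ‖y i‖ ≤ R) (x z : Euc n) : ‖sT y x - sT y z‖ ≤ (2 * R^2) * ‖x - z‖ := by
  have hR0 : 0 ≤ R := (norm_nonneg _).trans (hR ⟨0, hm⟩)
  let ι : Fin m → (Euc n →L[ℝ] ℝ) := fun i => innerSL ℝ (y i)
  have hι : ∀ i, ‖ι i‖ ≤ R := fun i => by simp only [ι, innerSL_apply_norm]; exact hR i
  have hin : ∀ i x, HasFDerivAt (fun x : Euc n => ⟪x, y i⟫) (ι i) x := by
    intro i x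
    have := (ι i).hasFDerivAt (x := x)
    refine this.congr_of_eventuallyEq (Filter.Eventually.of_forall fun z => ?_)
    simp only [ι, innerSL_apply_apply]
    exact real_inner_comm _ _
  let ℓ : Euc n → (Euc n →L[ℝ] ℝ) := fun x => (∑ i, Real.exp ⟪x, y i⟫)⁻¹ • ∑ i, Real.exp ⟪x, y i⟫ • ι i
  have hlse : ∀ x, HasFDerivAt (lse y) (ℓ x) x := by
    intro x
    have h1 : HasFDerivAt (fun x => ∑ i, Real.exp ⟪x, y i⟫) (∑ i, Real.exp ⟪x, y i⟫ • ι i) x := by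
      apply HasFDerivAt.fun_sum
      intro i _
      exact (hin i x).exp
    exact h1.log (sumexp_pos y hm x).ne'
  have hℓ : ∀ x, ‖ℓ x‖ ≤ R := by
    intro x
    have hp := sumexp_pos y hm x
    simp only [ℓ]
    rw [norm_smul, norm_inv, Real.norm_of_nonneg hp.le, inv_mul_le_iff₀ hp]
    refine (norm_sum_le _ _).trans ?_
    rw [Finset.sum_mul]
    apply Finset.sum_le_sum
    intro i _
    rw [norm_smul, Real.norm_of_nonneg (Real.exp_pos _).le]
    gcongr
    exact hι i
  have hT : ∀ x, HasFDerivAt (sT y) (∑ i, (smx y i x • (ι i - ℓ x)).smulRight (y i)) x := by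
    intro x
    unfold sT
    apply HasFDerivAt.fun_sum
    intro i _
    exact (((hin i x).sub (hlse x)).exp).smul_const (y i)
  have hb : ∀ x, ‖∑ i, (smx y i x • (ι i - ℓ x)).smulRight (y i)‖ ≤ 2 * R^2 := by
    intro x
    refine (norm_sum_le _ _).trans ?_
    calc ∑ i, ‖(smx y i x • (ι i - ℓ x)).smulRight (y i)‖ ≤ ∑ i, smx y i x * (2 * R^2) := by
          apply Finset.sum_le_sum
          intro i _
          have hp : 0 ≤ smx y i x := (Real.exp_pos _).le
          rw [ContinuousLinearMap.norm_smulRight_apply, norm_smul, Real.norm_of_nonneg hp]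
          have h1 : ‖ι i - ℓ x‖ ≤ 2 * R := (norm_sub_le _ _).trans (by linarith [hι i, hℓ x])
          calc smx y i x * ‖ι i - ℓ x‖ * ‖y i‖ ≤ smx y i x * (2 * R) * R := by
                gcongr
                exact hR i
            _ = _ := by ring
      _ = 2 * R^2 := by rw [← Finset.sum_mul, smx_sum y hm, one_mul]
  exact convex_univ.norm_image_sub_le_of_norm_hasFDerivWithin_le
    (fun x _ => (hT x).hasFDerivWithinAt) (fun x _ => hb x) (mem_univ z) (mem_univ x)
end

section
variable {n : ℕ}

lemma cov_le {T : Euc n → Euc n} {A : Euc n → Euc n →L[ℝ] Euc n} {ε : ℝ}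
    (hA : ∀ x, HasFDerivAt T (A x) x) (hε : 0 < ε)
    (hm : ∀ x y, ε * ‖x - y‖^2 ≤ ⟪T x - T y, x - y⟫) (f : Euc n × Euc n → ℝ≥0∞) :
    ∫⁻ p : Euc n × Euc n, ENNReal.ofReal |(A p.1 + A p.2).det| * f (p.1 + p.2, T p.1 - T p.2)
      ∂((volume : Measure (Euc n)).prod volume) ≤
    ∫⁻ q : Euc n × Euc n, f q ∂((volume : Measure (Euc n)).prod volume) := by
  let H : Euc n × Euc n → Euc n × Euc n := fun p => (p.1 + p.2, T p.1 - T p.2)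
  let I := ContinuousLinearMap.id ℝ (Euc n)
  let H' : Euc n × Euc n → (Euc n × Euc n) →L[ℝ] (Euc n × Euc n) := fun p =>
    blk I I (A p.1) (-(A p.2))
  have hH : ∀ p, HasFDerivAt H (H' p) p := by
    intro p
    have h1 : HasFDerivAt (fun p : Euc n × Euc n => p.1 + p.2)
        (I.comp (ContinuousLinearMap.fst ℝ _ _) + I.comp (ContinuousLinearMap.snd ℝ _ _)) p :=
      (hasFDerivAt_fst (𝕜 := ℝ) (p := p)).add (hasFDerivAt_snd (𝕜 := ℝ) (p := p))
    have h2 : HasFDerivAt (fun p : Euc n × Euc n => T p.1 - T p.2)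
        ((A p.1).comp (ContinuousLinearMap.fst ℝ _ _) +
          (-(A p.2)).comp (ContinuousLinearMap.snd ℝ _ _)) p := by
      have a1 := (hA p.1).comp p (hasFDerivAt_fst (𝕜 := ℝ) (p := p))
      have a2 := (hA p.2).comp p (hasFDerivAt_snd (𝕜 := ℝ) (p := p))
      have := a1.sub a2
      rw [ContinuousLinearMap.neg_comp, ← sub_eq_add_neg]
      exact this
    exact h1.prodMk h2
  have hinj : Function.Injective H := by
    rintro ⟨x, x'⟩ ⟨z, z'⟩ h
    simp only [H, Prod.mk.injEq] at h
    obtain ⟨h1, h2⟩ := h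
    have e1 : x' - z' = -(x - z) := by
      rw [neg_sub, sub_eq_sub_iff_add_eq_add, add_comm, h1, add_comm]
    have e2 : T x - T z = T x' - T z' := by
      rw [sub_eq_sub_iff_add_eq_add] at h2 ⊢
      rw [h2, add_comm]
    have b1 := hm x z
    have b2 := hm x' z'
    rw [e1, norm_neg, inner_neg_right, ← e2] at b2
    have : ε * ‖x - z‖^2 ≤ 0 := by linarith
    have h0 : ‖x - z‖ = 0 := by
      by_contra hne
      have : 0 < ‖x - z‖ := lt_of_le_of_ne (norm_nonneg _) (Ne.symm hne)
      have : 0 < ε * ‖x - z‖^2 := by positivity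
      linarith
    have hx : x = z := by rwa [norm_eq_zero, sub_eq_zero] at h0
    subst hx
    rw [sub_self, neg_zero, sub_eq_zero] at e1
    rw [e1]
  have hdet : ∀ p, |(H' p).det| = |(A p.1 + A p.2).det| := by
    intro p
    simp only [H', I]
    rw [blk_det, matR_one, Matrix.det_fromBlocks_one₁₁, matR_neg, mul_one, ← matR_det, matR_add,
      show -matR (A p.2) - matR (A p.1) = -(matR (A p.1) + matR (A p.2)) by abel, Matrix.det_neg,
      abs_mul, abs_pow, abs_neg, abs_one, one_pow, one_mul]
  have key := lintegral_image_eq_lintegral_abs_det_fderiv_mul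
    ((volume : Measure (Euc n)).prod volume) (f := H) (f' := H') (s := univ)
    MeasurableSet.univ (fun p _ => (hH p).hasFDerivWithinAt) hinj.injOn f
  rw [Measure.restrict_univ] at key
  simp only [hdet] at key
  rw [← key]
  exact setLIntegral_le_lintegral _ _

lemma net_card {D : Set (Euc n)} (hD : IsConvexBody D) (hs : D = -D) :
    ∃ (m : ℕ) (y : Fin m → Euc n), 0 < m ∧ (m : ℝ) ≤ 5 ^ n ∧ (∀ i, y i ∈ D) ∧
      D ⊆ ⋃ i, y i +ᵥ (1/2:ℝ) • D := by
  obtain ⟨m, y, hy, hc, hv⟩ := exists_net hD hD hs (α := 1/2) (by norm_num)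
  refine ⟨m, y, ?_, ?_, hy, hc⟩
  · rcases Nat.eq_zero_or_pos m with rfl | h
    · exfalso
      have := hc (interior_subset (zero_mem_int hD hs))
      simp at this
    · exact h
  · have e : D + (1/2/2:ℝ) • D = (5/4:ℝ) • D := by
      have := hD.2.1.add_smul (p := 1) (q := 1/2/2) (by norm_num) (by norm_num)
      rw [one_smul] at this
      rw [← this]; norm_num
    rw [e, vol_smul D (by norm_num)] at hv
    have hp := body_vol_pos hD
    have h2 : (m:ℝ) * (1/2/2)^n ≤ (5/4)^n := by
      rw [← mul_assoc] at hv
      exact le_of_mul_le_mul_right hv hp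
    have h3 : (5/4:ℝ)^n = 5^n * (1/2/2)^n := by rw [← mul_pow]; norm_num
    rw [h3] at h2
    exact le_of_mul_le_mul_right h2 (by positivity)

lemma bm_pointwise {D : Set (Euc n)} (hD : IsConvexBody D) (hs : D = -D) {m : ℕ}
    (y : Fin m → Euc n) (hm : 0 < m) (hy : ∀ i, y i ∈ D)
    (hcov : D ⊆ ⋃ i, y i +ᵥ (1/2:ℝ) • D) {r ε : ℝ} (hr : 0 < r) (hball : closedBall 0 r ⊆ D)
    (hε : 0 < ε) (hεr : ε * n^2 * (1/r)^2 ≤ 2) (x z : Euc n) :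
    Real.exp (-(⟪sT y x + ε • x, x⟫ + ⟪sT y z + ε • z, z⟫)) ≤
      (m^2 * Real.exp (2*n+1)) * (Real.exp (-(1/2 * gauge (polarSet D) (x + z))) *
        Real.exp (-(n * gauge D ((sT y x + ε • x) - (sT y z + ε • z))))) := by
  have hmp : (0:ℝ) < m := by exact_mod_cast hm
  have hDn := body_nhds hD hs
  have habs : Absorbent ℝ D := absorbent_nhds_zero hDn
  have hPn := body_nhds (polar_body hD hs) (polar_symm hs)
  have hPabs : Absorbent ℝ (polarSet D) := absorbent_nhds_zero hPn
  have lower : ∀ x, gauge (polarSet D) x / 2 - Real.log m + ε * ‖x‖^2 ≤ ⟪sT y x + ε • x, x⟫ := by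
    intro x
    obtain ⟨j, hj⟩ := gauge_polar_net hD hs y hcov x
    have := sT_ge y hm x j
    rw [inner_add_left, real_inner_smul_left, real_inner_self_eq_norm_sq]
    linarith
  have gadd := gauge_add_le (polar_body hD hs).2.1 hPabs x z
  have gb : ∀ v, gauge D v ≤ 1/r * ‖v‖ := by
    intro v
    have := mul_gauge_le_norm (s := D) (r := r) (x := v) (ball_subset_closedBall.trans hball)
    rw [one_div, inv_mul_eq_div, le_div_iff₀ hr]; linarith
  have g1 : ∀ x, gauge D (sT y x) ≤ 1 := fun x => gauge_le_one_of_mem (sT_mem y hm hD.2.1 hy x)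
  have g1' : ∀ x, gauge D (-sT y x) ≤ 1 := fun x =>
    gauge_le_one_of_mem (body_neg hs (sT_mem y hm hD.2.1 hy x))
  have gv : gauge D ((sT y x + ε • x) - (sT y z + ε • z)) ≤ 2 + 1/r * (ε * ‖x - z‖) := by
    have e : (sT y x + ε • x) - (sT y z + ε • z) = (sT y x + - sT y z) + ε • (x - z) := by
      rw [smul_sub]; abel
    rw [e]
    have a1 := gauge_add_le hD.2.1 habs (sT y x + - sT y z) (ε • (x - z))
    have a2 := gauge_add_le hD.2.1 habs (sT y x) (- sT y z)
    have a3 := gb (ε • (x - z))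
    rw [norm_smul, Real.norm_of_nonneg hε.le] at a3
    linarith [g1 x, g1' z]
  have pl : ‖x - z‖^2 ≤ 2 * (‖x‖^2 + ‖z‖^2) := by
    have := parallelogram_law_with_norm ℝ x z
    nlinarith [sq_nonneg ‖x + z‖]
  have young : n * (1/r * (ε * ‖x - z‖)) ≤ ε * (‖x‖^2 + ‖z‖^2) + 1 := by
    set s := ‖x - z‖
    set B := 1/r
    have q : n * (B * (ε * s)) ≤ ε * s^2/2 + ε * n^2 * B^2 / 2 := by
      nlinarith [mul_nonneg hε.le (sq_nonneg (s - n * B))]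
    nlinarith [mul_le_mul_of_nonneg_left pl hε.le]
  have nv : n * gauge D ((sT y x + ε • x) - (sT y z + ε • z)) ≤
      2 * n + (ε * (‖x‖^2 + ‖z‖^2) + 1) := by
    have := mul_le_mul_of_nonneg_left gv (Nat.cast_nonneg (α := ℝ) n)
    linarith
  have hlog : (m:ℝ)^2 = Real.exp (2 * Real.log m) := by
    rw [two_mul, Real.exp_add, Real.exp_log hmp, sq]
  rw [hlog, ← Real.exp_add, ← Real.exp_add, ← Real.exp_add]
  apply Real.exp_le_exp.2
  linarith [lower x, lower z]

theorem bourgain_milman (hn : 1 ≤ n) {D : Set (Euc n)} (hD : IsConvexBody D) (hs : D = -D) :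
    (2 * Real.pi)^n ≤ 25^n * Real.exp (2*n+1) * 2^n * n.factorial *
      ((volume D).toReal * (volume (polarSet D)).toReal) := by
  obtain ⟨m, y, hm, hm5, hy, hcov⟩ := net_card hD hs
  obtain ⟨r, hr, hball⟩ := exists_ball_sub hD hs
  obtain ⟨R, hR, hDR⟩ := exists_sub_ball hD
  have hn0 : (0:ℝ) < n := by exact_mod_cast hn
  let ε : ℝ := 2 * (r / n)^2
  have hε : 0 < ε := by positivity
  have hεr : ε * n^2 * (1/r)^2 ≤ 2 := by
    apply le_of_eq; simp only [ε]; field_simp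
  let T : Euc n → Euc n := fun x => sT y x + ε • x
  have hTc : ContDiff ℝ 1 T := (sT_contDiff y hm).add (contDiff_id.const_smul ε)
  have hA : ∀ x, HasFDerivAt T (fderiv ℝ T x) x := fun x =>
    ((hTc.differentiable (by norm_num)) x).hasFDerivAt
  have hAc : Continuous (fderiv ℝ T) := hTc.continuous_fderiv (by norm_num)
  have hyR : ∀ i, ‖y i‖ ≤ R := fun i => by simpa using hDR (hy i)
  have hTs : ∀ x z, T x - T z = (sT y x - sT y z) + ε • (x - z) := by
    intro x z; simp only [T]; rw [smul_sub]; abel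
  have hL : ∀ x z, ‖T x - T z‖ ≤ (2*R^2 + ε) * ‖x - z‖ := by
    intro x z
    rw [hTs]
    refine (norm_add_le _ _).trans ?_
    rw [norm_smul, Real.norm_of_nonneg hε.le, add_mul]
    gcongr
    exact sT_lip y hm hyR x z
  have hmo : ∀ x z, ε * ‖x - z‖^2 ≤ ⟪T x - T z, x - z⟫ := by
    intro x z
    rw [hTs, inner_add_left, real_inner_smul_left, real_inner_self_eq_norm_sq]
    linarith [sT_mono y hm x z]
  have k := key_C0 hA hAc hε (by positivity : (0:ℝ) ≤ 2*R^2+ε) hL hmo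
  set Q : ℝ := m^2 * Real.exp (2*n+1) with hQ
  have hQ0 : 0 ≤ Q := by positivity
  let f1 : Euc n → ℝ≥0∞ := fun u => ENNReal.ofReal (Real.exp (-(1/2 * gauge (polarSet D) u)))
  let f2 : Euc n → ℝ≥0∞ := fun v => ENNReal.ofReal (Real.exp (-(n * gauge D v)))
  let f : Euc n × Euc n → ℝ≥0∞ := fun q => ENNReal.ofReal Q * (f1 q.1 * f2 q.2)
  have hpt : ∀ p : Euc n × Euc n, ENNReal.ofReal (Real.exp (-(⟪T p.1,p.1⟫+⟪T p.2,p.2⟫))) ≤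
      f (p.1 + p.2, T p.1 - T p.2) := by
    intro p
    simp only [f, f1, f2]
    rw [← ENNReal.ofReal_mul (Real.exp_pos _).le, ← ENNReal.ofReal_mul hQ0]
    exact ENNReal.ofReal_le_ofReal (bm_pointwise hD hs y hm hy hcov hr hball hε hεr p.1 p.2)
  have hPb := polar_body hD hs
  have hPs := polar_symm hs
  have m1 : Measurable f1 := by
    have : Continuous (gauge (polarSet D)) := continuous_gauge hPb.2.1 (body_nhds hPb hPs)
    have := this.measurable
    fun_prop
  have m2 : Measurable f2 := by
    have : Continuous (gauge D) := continuous_gauge hD.2.1 (body_nhds hD hs)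
    have := this.measurable
    fun_prop
  have k2 : ENNReal.ofReal ((2*Real.pi)^n) ≤ ENNReal.ofReal (Q *
      ((n.factorial * (((1/2:ℝ)⁻¹)^n * (volume (polarSet D)).toReal)) *
       (n.factorial * (((n:ℝ)⁻¹)^n * (volume D).toReal)))) := by
    refine k.trans ((lintegral_mono fun p => mul_le_mul_right (hpt p) _).trans
      ((cov_le hA hε hmo f).trans ?_))
    simp only [f]
    rw [lintegral_const_mul _ (by fun_prop), lintegral_prod_mul m1.aemeasurable m2.aemeasurable,
      ENNReal.ofReal_mul hQ0,
      ENNReal.ofReal_mul (p := n.factorial * (((1/2:ℝ)⁻¹)^n * (volume (polarSet D)).toReal))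
        (by positivity)]
    exact mul_le_mul' le_rfl (mul_le_mul' (lint_gauge hPb hPs (a := 1/2) (by norm_num))
      (lint_gauge hD hs hn0))
  have k3 := (ENNReal.ofReal_le_ofReal_iff (by positivity)).1 k2
  refine k3.trans ?_
  have hf : (n.factorial : ℝ) * ((n:ℝ)⁻¹)^n ≤ 1 := by
    have : (n.factorial : ℝ) ≤ n^n := by exact_mod_cast Nat.factorial_le_pow n
    rw [inv_pow, ← div_eq_mul_inv]
    exact div_le_one_of_le₀ this (by positivity)
  have hm2 : (m:ℝ)^2 ≤ 25^n := by
    calc (m:ℝ)^2 ≤ (5^n)^2 := by gcongr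
      _ = 25^n := by rw [← pow_mul, mul_comm, pow_mul]; norm_num
  have h2 : ((1/2:ℝ)⁻¹) = 2 := by norm_num
  rw [h2, hQ]
  calc (m:ℝ)^2 * Real.exp (2*n+1) * ((n.factorial * (2^n * (volume (polarSet D)).toReal)) *
       (n.factorial * (((n:ℝ)⁻¹)^n * (volume D).toReal)))
      = (m:ℝ)^2 * (n.factorial * ((n:ℝ)⁻¹)^n) * (Real.exp (2*n+1) * 2^n * n.factorial *
        ((volume D).toReal * (volume (polarSet D)).toReal)) := by ring
    _ ≤ 25^n * 1 * (Real.exp (2*n+1) * 2^n * n.factorial *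
        ((volume D).toReal * (volume (polarSet D)).toReal)) := by gcongr
    _ = _ := by ring
end

lemma Gamma_mid {s t : ℝ} (hs : 0 < s) (ht : 0 < t) :
    Real.Gamma ((s + t) / 2) ^ 2 ≤ Real.Gamma s * Real.Gamma t := by
  have h := Real.Gamma_mul_add_mul_le_rpow_Gamma_mul_rpow_Gamma hs ht
    (a := 1/2) (b := 1/2) (by norm_num) (by norm_num) (by norm_num)
  have gs := Real.Gamma_pos_of_pos hs
  have gt := Real.Gamma_pos_of_pos ht
  rw [← Real.mul_rpow gs.le gt.le, ← Real.sqrt_eq_rpow,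
    show 1/2 * s + 1/2 * t = (s + t)/2 by ring] at h
  have gm := Real.Gamma_pos_of_pos (show 0 < (s+t)/2 by positivity)
  calc _ ≤ (√(Real.Gamma s * Real.Gamma t))^2 := by gcongr
    _ = _ := Real.sq_sqrt (by positivity)

lemma Gamma_up (n : ℕ) : Real.Gamma (n/2+1)^2 ≤ n.factorial := by
  have := Gamma_mid (s := 1) (t := n+1) (by norm_num) (by positivity)
  rw [Real.Gamma_one, one_mul, Real.Gamma_nat_eq_factorial,
    show ((1:ℝ) + (n+1))/2 = n/2+1 by ring] at this
  exact this

lemma Gamma_low (n : ℕ) (hn : 2 ≤ n) : (n.factorial : ℝ) ≤ 2^n * Real.Gamma (n/2+1)^2 := by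
  have hn2 : (2:ℝ) ≤ n := by exact_mod_cast hn
  have h2 : (0:ℝ) < (n:ℝ)/2 := by linarith
  have g0 := Real.Gamma_pos_of_pos h2
  have g1 := Real.Gamma_pos_of_pos (show (0:ℝ) < (n:ℝ)/2+1 by linarith)
  have gm := Real.Gamma_pos_of_pos (show (0:ℝ) < ((n:ℝ)+1)/2 by linarith)
  have a := Gamma_mid h2 (show (0:ℝ) < (n:ℝ)/2+1 by linarith)
  rw [show ((n:ℝ)/2 + (n/2+1))/2 = (n+1)/2 by ring] at a
  have b : Real.Gamma (n/2) ≤ Real.Gamma (n/2+1) := by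
    rw [Real.Gamma_add_one h2.ne']
    nlinarith
  have c : Real.Gamma ((n+1)/2) ≤ Real.Gamma (n/2+1) := by
    apply le_of_sq_le_sq _ g1.le
    nlinarith
  have e := Real.Gamma_mul_Gamma_add_half (((n:ℝ)+1)/2)
  rw [show ((n:ℝ)+1)/2 + 1/2 = n/2+1 by ring, show 2 * (((n:ℝ)+1)/2) = n+1 by ring,
    Real.Gamma_nat_eq_factorial, show (1:ℝ) - (n+1) = -n by ring,
    Real.rpow_neg (by norm_num), Real.rpow_natCast] at e
  have hpi : 1 ≤ √Real.pi := Real.one_le_sqrt.2 (by linarith [Real.pi_gt_three])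
  have f : (n.factorial : ℝ) * (2^n)⁻¹ ≤ Real.Gamma (n/2+1)^2 := by
    calc (n.factorial : ℝ) * (2^n)⁻¹ ≤ n.factorial * (2^n)⁻¹ * √Real.pi :=
          le_mul_of_one_le_right (by positivity) hpi
      _ = _ := e.symm
      _ ≤ _ := by rw [sq]; gcongr
  rw [← div_eq_mul_inv, div_le_iff₀ (by positivity)] at f
  linarith

lemma omega_sq (n : ℕ) (hn : 1 ≤ n) : ωd n ^ 2 * Real.Gamma (n/2+1)^2 = Real.pi^n := by
  have : Nonempty (Fin n) := ⟨⟨0, hn⟩⟩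
  have g1 := Real.Gamma_pos_of_pos (show (0:ℝ) < (n:ℝ)/2+1 by positivity)
  have h : ωd n = √Real.pi ^ n / Real.Gamma (n/2+1) := by
    rw [ωd, EuclideanSpace.volume_ball]
    simp only [ENNReal.ofReal_one, one_pow, one_mul, Fintype.card_fin]
    exact ENNReal.toReal_ofReal (by positivity)
  rw [h, div_pow, div_mul_cancel₀ _ (by positivity), ← pow_mul, mul_comm n 2, pow_mul,
    Real.sq_sqrt Real.pi_pos.le]

/-- Volumetric bounds for translative covering numbers. -/
theorem mink_cover_volume_bounds :
    ∃ c : ℝ, 1 ≤ c ∧ ∀ d : ℕ, 2 ≤ d →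
      ∀ C D : Set (Euc d), IsConvexBody C → IsConvexBody D → D = -D →
        ∀ α : ℝ, 0 < α →
          (c ^ d)⁻¹ * ((volume (polarSet D)).toReal * (volume C).toReal /
              (ωd d ^ 2 * α ^ d)) ≤ (transCov D C α : ℝ) ∧
          (transCov D C α : ℝ) ≤
            c ^ d * ((volume (polarSet D)).toReal * (volume (C + α • D)).toReal /
              (ωd d ^ 2 * α ^ d)) := by
  have hpi := Real.pi_gt_three
  have he3 : 1 ≤ Real.exp 3 := Real.one_le_exp (by norm_num)
  have hK : 0 < 8 * Real.exp (8*Real.pi) := by positivity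
  have hL1 : 1 ≤ 200 * Real.pi * Real.exp 3 := by nlinarith
  refine ⟨8 * Real.exp (8*Real.pi) + 200 * Real.pi * Real.exp 3, by linarith, ?_⟩
  intro d hd C D hC hD hs α hα
  set K := 8 * Real.exp (8*Real.pi)
  set L := 200 * Real.pi * Real.exp 3 with hL
  have hd1 : 1 ≤ d := by omega
  have hd0 : (0:ℝ) < d := by exact_mod_cast hd1
  have hvD := body_vol_pos hD
  have hvP := body_vol_pos (polar_body hD hs)
  set vD := (volume D).toReal
  set vP := (volume (polarSet D)).toReal
  have g1 := Real.Gamma_pos_of_pos (show (0:ℝ) < (d:ℝ)/2+1 by positivity)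
  have hom := omega_sq d hd1
  have hup := Gamma_up d
  have hlow := Gamma_low d hd
  set g := Real.Gamma (d/2+1)
  have hpid : 1 ≤ Real.pi^d := one_le_pow₀ (by linarith)
  have hω : 0 < ωd d ^ 2 := by
    by_contra h
    have : ωd d ^ 2 = 0 := le_antisymm (not_lt.1 h) (sq_nonneg _)
    rw [this, zero_mul] at hom
    linarith
  obtain ⟨m, x, hx, hcov, hm⟩ := exists_net hC hD hs hα
  constructor
  · have hne : {m : ℕ | ∃ x : Fin m → Euc d, C ⊆ ⋃ i, x i +ᵥ α • D}.Nonempty := ⟨m, x, hcov⟩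
    obtain ⟨x', hx'⟩ := Nat.sInf_mem hne
    have hN := cover_lower hD hα x' hx'
    change _ ≤ (transCov D C α : ℝ) * _ at hN
    set N : ℝ := (transCov D C α : ℝ)
    have hN0 : 0 ≤ N := Nat.cast_nonneg _
    have hsan := santalo hd1 hD hs
    have hfac : (d.factorial : ℝ) ≤ d^d := by exact_mod_cast Nat.factorial_le_pow d
    have h1 : 1 ≤ ωd d ^ 2 * (d:ℝ)^d := by
      calc 1 ≤ Real.pi^d := hpid
        _ = ωd d ^ 2 * g^2 := hom.symm
        _ ≤ _ := by gcongr; exact hup.trans hfac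
    rw [inv_mul_le_iff₀ (by positivity), div_le_iff₀ (by positivity)]
    calc vP * (volume C).toReal ≤ vP * (N * (α^d * vD)) := by gcongr
      _ = N * α^d * (vD * vP) * 1 := by ring
      _ ≤ N * α^d * (vD * vP) * (ωd d ^ 2 * (d:ℝ)^d) := by gcongr
      _ = N * α^d * ωd d ^ 2 * (vD * vP * (d:ℝ)^d) := by ring
      _ ≤ N * α^d * ωd d ^ 2 * (K + L)^d := by
          gcongr
          refine hsan.trans ?_
          gcongr
          linarith
      _ = _ := by ring
  · have hNm : (transCov D C α : ℝ) ≤ m := by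
      exact_mod_cast Nat.sInf_le (s := {m : ℕ | ∃ x : Fin m → Euc d, C ⊆ ⋃ i, x i +ᵥ α • D}) ⟨x, hcov⟩
    have hV : (volume (C + (α/2) • D)).toReal ≤ (volume (C + α • D)).toReal := by
      apply ENNReal.toReal_mono
      · exact (hC.1.add (hD.1.smul α)).measure_lt_top.ne
      · apply measure_mono
        apply Set.add_subset_add_left
        intro z hz
        obtain ⟨w, hw, rfl⟩ := hz
        refine ⟨(1/2:ℝ) • w, ?_, ?_⟩
        · have h0 : (0 : Euc d) ∈ D := interior_subset (zero_mem_int hD hs)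
          exact hD.2.1.smul_mem_of_zero_mem h0 hw ⟨by norm_num, by norm_num⟩
        · simp only [smul_smul]; congr 1; ring
    set V := (volume (C + α • D)).toReal
    have hbm := bourgain_milman hd1 hD hs
    have hexp : Real.exp (2*d+1) ≤ Real.exp 3 ^ d := by
      rw [← Real.exp_nat_mul]
      apply Real.exp_le_exp.2
      have : (1:ℝ) ≤ d := by exact_mod_cast hd1
      linarith
    have hb2 : 1 ≤ (50 * Real.exp 3)^d * d.factorial * (vD * vP) := by
      calc 1 ≤ (2*Real.pi)^d := one_le_pow₀ (by linarith)
        _ ≤ _ := hbm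
        _ ≤ 25^d * Real.exp 3 ^ d * 2^d * d.factorial * (vD * vP) := by gcongr
        _ = _ := by
          rw [← mul_pow, ← mul_pow]; congr 3; ring
    have hb3 : ωd d ^ 2 ≤ (100 * Real.pi * Real.exp 3)^d * (vD * vP) := by
      calc ωd d ^ 2 = ωd d ^ 2 * 1 := by ring
        _ ≤ ωd d ^ 2 * ((50 * Real.exp 3)^d * (2^d * g^2) * (vD * vP)) := by
          have : (50 * Real.exp 3)^d * d.factorial * (vD * vP) ≤
            (50 * Real.exp 3)^d * (2^d * g^2) * (vD * vP) := by gcongr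
          gcongr
          exact hb2.trans this
        _ = (50 * Real.exp 3)^d * 2^d * (ωd d ^ 2 * g^2) * (vD * vP) := by ring
        _ = _ := by
          rw [hom, ← mul_pow, ← mul_pow]; congr 2; ring
    refine hNm.trans ?_
    rw [← mul_div_assoc, le_div_iff₀ (by positivity)]
    calc (m:ℝ) * (ωd d ^ 2 * α^d) ≤
        m * (((100 * Real.pi * Real.exp 3)^d * (vD * vP)) * α^d) := by gcongr
      _ = m * ((α/2)^d * vD) * vP * L^d := by
        have e1 : α^d = (α/2)^d * 2^d := by rw [← mul_pow]; congr 1; ring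
        have e2 : L^d = (100 * Real.pi * Real.exp 3)^d * 2^d := by
          rw [← mul_pow]; congr 1; rw [hL]; ring
        rw [e1, e2]; ring
      _ ≤ V * vP * (K + L)^d := by
        gcongr
        · exact hm.trans hV
        · linarith
      _ = _ := by ring
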